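/- arXiv:2308.15026 — 2 statements merged into one kernel-verified Lean document; each statement's English description precedes it below -/
import Mathlib

section
/- Let ζ ∈ [0, ∞) and α ∈ (0,2). Then there exists a constant C > 0 (depending only on ζ and α) such that for all r, s, z, t, τ > 0: p_ζ^{(α)}(t,r,z) · p_ζ^{(α)}(τ,z,s) ≤ C · p_ζ^{(α)}(t+τ,r,s) · [ ((r+s+z)/(s+z))^{2ζ} · p_ζ^{(α)}(t,r,z) + ((r+s+z)/(r+z))^{2ζ} · p_ζ^{(α)}(τ,z,s) ]. -/
open MeasureTheory Real Set Filter

/-- Modified Bessel function of the first kind of order `ν`. -/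
noncomputable def besselI (ν x : ℝ) : ℝ :=
  ∑' k : ℕ, (x / 2) ^ (2 * (k : ℝ) + ν) / ((Nat.factorial k : ℝ) * Real.Gamma ((k : ℝ) + ν + 1))

/-- The Bessel heat kernel `p_ζ^{(2)}(t,r,s)`. -/
noncomputable def besselHeat (ζ t r s : ℝ) : ℝ :=
  (r * s) ^ ((1 : ℝ) / 2 - ζ) / (2 * t) * Real.exp (-(r ^ 2 + s ^ 2) / (4 * t)) *
    besselI (ζ - 1 / 2) (r * s / (2 * t))

/-- `σ` is a family of `α/2`-stable subordinator densities. -/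
def IsStableSubordinatorDensity (α : ℝ) (σ : ℝ → ℝ → ℝ) : Prop :=
  (∀ t, 0 < t → ∀ τ, 0 < τ → 0 ≤ σ t τ) ∧
  (∀ t, 0 < t → Measurable (σ t)) ∧
  (∀ t l : ℝ, 0 < t → 0 ≤ l →
    (∫ τ in Ioi (0 : ℝ), Real.exp (-τ * l) * σ t τ) = Real.exp (-t * l ^ (α / 2)))

/-- The `α/2`-subordinated Bessel heat kernel `p_ζ^{(α)}(t,r,s)`. -/
noncomputable def subKernel (ζ : ℝ) (σ : ℝ → ℝ → ℝ) (t r s : ℝ) : ℝ :=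
  ∫ τ in Ioi (0 : ℝ), besselHeat ζ τ r s * σ t τ

/-! By the duplication formula for `Γ`, the power series of `I_ν` is comparable term by term to the
series of `cosh` weighted by `(1 + k) ^ (-(ν + 1/2))`, so `p_ζ^{(2)}` is comparable to the Gaussian
profile `τ^{-1/2} (2τ + rs)^{-ζ} exp(-(r-s)²/(4τ))`. Integrating this profile against `σ_t` needs
only the Laplace transform of `σ_t`: negative moments bound the kernel near the diagonal, the
exponents `∫ (1 - e^{-λτ}) σ_t(τ) dτ` bound it away from the diagonal, and a combination of three
of them bounds from below the mass of `σ_t` on a window of times `τ ≍ X²`. Hence `p_ζ^{(α)}(t,r,s)`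
is comparable to `t X^{-1-α} (X + r + s)^{-2ζ}` with `X = max(t^{1/α}, |r-s|)`. This `X` is
quasi-additive: `X(t+τ,r,s)` is at most a constant times the larger of `X(t,r,z)` and `X(τ,z,s)`,
and the factor of the product with the larger `X` is then dominated by `p_ζ^{(α)}(t+τ,r,s)`, at the
cost of the weight that compares the spatial factors. -/

/-! ### Elementary inequalities -/

section Elementary

variable {p x : ℝ}

theorem rpow_neg_le_mul_rpow_neg {a b q : ℝ} (ha : 0 < a) (hb : 0 < b) (h : b ≤ q * a)
    (hp : 0 ≤ p) : a ^ (-p) ≤ q ^ p * b ^ (-p) := by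
  have hq : 0 < q := pos_of_mul_pos_left (hb.trans_le h) ha.le
  calc a ^ (-p) = q ^ p * (q * a) ^ (-p) := by
        rw [mul_rpow hq.le ha.le, ← mul_assoc, ← rpow_add hq, add_neg_cancel, rpow_zero, one_mul]
    _ ≤ q ^ p * b ^ (-p) := by
        gcongr ?_ * ?_
        exact rpow_le_rpow_of_nonpos hb h (neg_nonpos.2 hp)

theorem sq_rpow_neg (hx : 0 ≤ x) (p : ℝ) : (x ^ 2) ^ (-p) = x ^ (-(2 * p)) := by
  rw [← rpow_two, ← rpow_mul hx, mul_neg]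

theorem one_add_rpow_le (hx : 0 ≤ x) (hp : 0 ≤ p) : (1 + x) ^ p ≤ 2 ^ p * (1 + x ^ p) := by
  have hxp : 0 ≤ x ^ p := by positivity
  calc (1 + x) ^ p ≤ (2 * max 1 x) ^ p := by
        gcongr
        linarith [le_max_left 1 x, le_max_right 1 x]
    _ = 2 ^ p * max 1 x ^ p := mul_rpow zero_le_two (by positivity)
    _ ≤ 2 ^ p * (1 + x ^ p) := by
        gcongr
        rcases max_cases 1 x with ⟨h, -⟩ | ⟨h, -⟩ <;> rw [h]
        · rw [one_rpow]
          linarith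
        · linarith

theorem rpow_le_one_add_pow {n : ℕ} (hx : 0 ≤ x) (hp : 0 ≤ p) (hn : p ≤ n) :
    x ^ p ≤ 1 + x ^ n := by
  rcases le_total x 1 with h | h
  · linarith [rpow_le_one hx h hp, pow_nonneg hx n]
  · have := rpow_le_rpow_of_exponent_le h hn
    rw [rpow_natCast] at this
    linarith

theorem tangent_le_rpow_neg {m : ℝ} (hm : 0 < m) (hx : 0 < x) (hp : 0 ≤ p) :
    m ^ (-p) * (1 - p * (x / m - 1)) ≤ x ^ (-p) := by
  have hxm : 0 < x / m := div_pos hx hm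
  calc m ^ (-p) * (1 - p * (x / m - 1)) ≤ m ^ (-p) * exp (log (x / m) * -p) := by
        gcongr
        have := mul_le_mul_of_nonneg_left (log_le_sub_one_of_pos hxm) hp
        linarith [add_one_le_exp (log (x / m) * -p)]
    _ = x ^ (-p) := by
        rw [← rpow_def_of_pos hxm, ← mul_rpow hm.le hxm.le, mul_div_cancel₀ x hm.ne']

theorem one_add_rpow_mul_exp_neg_le {b : ℝ} (hp : 0 ≤ p) (hb : 0 < b) (hx : 0 ≤ x) :
    (1 + x) ^ p * exp (-(b * x)) ≤ (1 + p / b) ^ p := by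
  set N := 1 + p / b with hN_def
  have hN1 : 1 ≤ N := le_add_of_nonneg_right (by positivity)
  have hN : 0 < N := by positivity
  have hbase : 1 + x ≤ N * exp (x / N) :=
    calc 1 + x ≤ N * (x / N + 1) := by rw [mul_add, mul_div_cancel₀ x hN.ne']; linarith
      _ ≤ N * exp (x / N) := by gcongr; exact add_one_le_exp _
  have hexponent : x / N * p ≤ b * x := by
    rw [div_mul_eq_mul_div, div_le_iff₀ hN, hN_def]
    have : b * x * (1 + p / b) = b * x + x * p := by field_simp
    rw [this]
    exact le_add_of_nonneg_left (by positivity)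
  calc (1 + x) ^ p * exp (-(b * x)) ≤ (N * exp (x / N)) ^ p * exp (-(b * x)) := by gcongr
    _ = N ^ p * exp (x / N * p - b * x) := by
        rw [mul_rpow hN.le (exp_pos _).le, ← exp_mul, mul_assoc, ← exp_add, sub_eq_add_neg]
    _ ≤ N ^ p := mul_le_of_le_one_right (by positivity) (exp_le_one_iff.2 (by linarith))

theorem div_one_add_le_one_sub_exp_neg (hx : 0 ≤ x) : x / (1 + x) ≤ 1 - exp (-x) := by
  have h : exp (-x) ≤ (1 + x)⁻¹ := by
    rw [exp_neg]
    gcongr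
    linarith [add_one_le_exp x]
  have : x / (1 + x) = 1 - (1 + x)⁻¹ := by field_simp; ring
  linarith

theorem div_two_le_one_sub_exp_neg (hx : 0 ≤ x) (hx1 : x ≤ 1) : x / 2 ≤ 1 - exp (-x) :=
  (div_le_div_of_nonneg_left hx (by positivity) (by linarith)).trans
    (div_one_add_le_one_sub_exp_neg hx)

theorem one_sub_exp_neg_nonneg (hx : 0 ≤ x) : 0 ≤ 1 - exp (-x) :=
  sub_nonneg.2 (exp_le_one_iff.2 (neg_nonpos.2 hx))

theorem one_half_le_one_sub_exp_neg (hx : 1 ≤ x) : 1 / 2 ≤ 1 - exp (-x) := by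
  refine le_trans ?_ (div_one_add_le_one_sub_exp_neg (zero_le_one.trans hx))
  rw [div_le_div_iff₀ two_pos (by linarith)]
  linarith

theorem one_sub_exp_neg_le_indicator_add {ε M : ℝ} (hε : 0 < ε) (hM : 0 < M) (hx : 0 ≤ x) :
    1 - exp (-x) ≤ (Icc ε M).indicator 1 x + 2 * ε * (1 - exp (-(x / ε))) +
      2 * (1 - exp (-(x / M))) := by
  have hnonneg_ε : 0 ≤ 2 * ε * (1 - exp (-(x / ε))) :=
    mul_nonneg (by positivity) (one_sub_exp_neg_nonneg (by positivity))
  have hnonneg_M : 0 ≤ 1 - exp (-(x / M)) := one_sub_exp_neg_nonneg (by positivity)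
  have hle_one : 1 - exp (-x) ≤ 1 := sub_le_self 1 (exp_pos _).le
  by_cases hmem : x ∈ Icc ε M
  · rw [indicator_of_mem hmem, Pi.one_apply]
    linarith
  rw [indicator_of_notMem hmem]
  rcases lt_or_ge x ε with hlt | hge
  · have hsmall : x ≤ 2 * ε * (1 - exp (-(x / ε))) :=
      calc x = 2 * ε * (x / ε / 2) := by field_simp
        _ ≤ 2 * ε * (1 - exp (-(x / ε))) := by
          gcongr
          exact div_two_le_one_sub_exp_neg (by positivity) ((div_le_one hε).2 hlt.le)
    linarith [one_sub_le_exp_neg x]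
  · have hMx : M < x := lt_of_not_ge fun h => hmem ⟨hge, h⟩
    linarith [one_half_le_one_sub_exp_neg ((one_le_div hM).2 hMx.le)]

theorem rpow_neg_half_mul_exp_neg_inv_le (hx : 0 < x) :
    x ^ (-(1 / 2) : ℝ) * exp (-(1 / 8 * x⁻¹)) ≤ 17 ^ 2 * (1 - exp (-x)) := by
  have hsqrt : x ^ (-(1 / 2) : ℝ) ≤ 1 + x⁻¹ := by
    rw [rpow_neg hx.le, ← inv_rpow hx.le, ← sqrt_eq_rpow, sqrt_le_left (by positivity)]
    nlinarith [inv_pos.2 hx]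
  have hexp : (1 + x⁻¹) ^ 2 * exp (-(1 / 8 * x⁻¹)) ≤ 17 ^ 2 := by
    have h := one_add_rpow_mul_exp_neg_le zero_le_two (by norm_num : (0 : ℝ) < 1 / 8)
      (inv_nonneg.2 hx.le)
    norm_num [rpow_two] at h ⊢
    exact h
  calc x ^ (-(1 / 2) : ℝ) * exp (-(1 / 8 * x⁻¹)) ≤ (1 + x⁻¹) * exp (-(1 / 8 * x⁻¹)) := by gcongr
    _ = (1 + x⁻¹) ^ 2 * exp (-(1 / 8 * x⁻¹)) * (x / (1 + x)) := by field_simp; ring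
    _ ≤ 17 ^ 2 * (1 - exp (-x)) :=
        mul_le_mul hexp (div_one_add_le_one_sub_exp_neg hx.le) (by positivity) (by positivity)

end Elementary

/-! ### Ratios of Gamma values -/

section GammaRatio

open scoped Nat Topology

theorem Gamma_add_nat_add_one_eq_mul_prod {s : ℝ} (hs : 0 < s) (n : ℕ) :
    Gamma (s + n + 1) = Gamma s * ∏ j ∈ Finset.range (n + 1), (s + j) := by
  induction n with
  | zero => simp [Gamma_add_one hs.ne', mul_comm]
  | succ n ih =>
    rw [Finset.prod_range_succ, ← mul_assoc, ← ih, Nat.cast_add_one, ← add_assoc,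
      Gamma_add_one (by positivity), mul_comm]

theorem tendsto_Gamma_nat_add_div {s : ℝ} (hs : 0 < s) :
    Tendsto (fun n : ℕ => Gamma (n + s) / (n ! * (1 + n : ℝ) ^ (s - 1))) atTop (𝓝 1) := by
  have hΓs : Gamma s ≠ 0 := (Gamma_pos_of_pos hs).ne'
  have heuler := ((GammaSeq_tendsto_Gamma s).div_const (Gamma s)).inv₀ (by simp [hΓs])
  have hshift := tendsto_natCast_div_add_atTop (1 : ℝ)
  have hratio := ((hshift.rpow_const (p := s) (Or.inl one_ne_zero)).mul
    (tendsto_natCast_div_add_atTop s)).div hshift one_ne_zero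
  have h := heuler.mul hratio
  rw [div_self hΓs, inv_one, one_rpow, one_mul, div_one, one_mul] at h
  refine h.congr' ?_
  filter_upwards [eventually_gt_atTop 0] with n hn
  have hn : (0 : ℝ) < n := by exact_mod_cast hn
  have hΓ : Gamma (n + s) * (s + n) = Gamma s * ∏ j ∈ Finset.range (n + 1), (s + j) := by
    rw [← Gamma_add_nat_add_one_eq_mul_prod hs, Gamma_add_one (by positivity), add_comm s, mul_comm]
  have : 0 < ∏ j ∈ Finset.range (n + 1), (s + j) :=
    Finset.prod_pos fun j _ => by positivity
  rw [Pi.div_apply, GammaSeq, div_rpow hn.le (by positivity), rpow_sub_one (by positivity),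
    eq_div_of_mul_eq (by positivity) hΓ, add_comm (1 : ℝ)]
  field_simp
  ring

theorem tendsto_Gamma_nat_add_ratio {a b : ℝ} (ha : 0 < a) (hb : 0 < b) :
    Tendsto (fun n : ℕ => Gamma (n + a) / Gamma (n + b) / (1 + n : ℝ) ^ (a - b)) atTop (𝓝 1) := by
  have h := (tendsto_Gamma_nat_add_div ha).div (tendsto_Gamma_nat_add_div hb) one_ne_zero
  rw [div_one] at h
  refine h.congr fun n => ?_
  have : 0 < Gamma (n + b) := Gamma_pos_of_pos (by positivity)
  have hpow : (1 + n : ℝ) ^ (a - b) = (1 + n : ℝ) ^ (a - 1) / (1 + n : ℝ) ^ (b - 1) := by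
    rw [← rpow_sub (by positivity), sub_sub_sub_cancel_right]
  rw [Pi.div_apply, hpow]
  field_simp

theorem exists_bounds_of_tendsto_pos {u : ℕ → ℝ} {l : ℝ} (hu : ∀ n, 0 < u n) (hl : 0 < l)
    (h : Tendsto u atTop (𝓝 l)) : ∃ c > 0, ∃ C > 0, ∀ n, c ≤ u n ∧ u n ≤ C := by
  obtain ⟨C, hC⟩ := h.bddAbove_range
  obtain ⟨D, hD⟩ := (h.inv₀ hl.ne').bddAbove_range
  rw [mem_upperBounds, forall_mem_range] at hC hD
  exact ⟨D⁻¹, inv_pos.2 ((inv_pos.2 (hu 0)).trans_le (hD 0)), C, (hu 0).trans_le (hC 0),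
    fun n => ⟨inv_le_of_inv_le₀ (hu n) (hD n), hC n⟩⟩

theorem exists_Gamma_nat_add_ratio_bounds {a b : ℝ} (ha : 0 < a) (hb : 0 < b) :
    ∃ c > 0, ∃ C > 0, ∀ n : ℕ, c * (1 + n : ℝ) ^ (a - b) ≤ Gamma (n + a) / Gamma (n + b) ∧
      Gamma (n + a) / Gamma (n + b) ≤ C * (1 + n : ℝ) ^ (a - b) := by
  have hpos (n : ℕ) : 0 < Gamma (n + a) / Gamma (n + b) / (1 + n : ℝ) ^ (a - b) :=
    div_pos (div_pos (Gamma_pos_of_pos (by positivity)) (Gamma_pos_of_pos (by positivity)))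
      (by positivity)
  obtain ⟨c, hc, C, hC, h⟩ :=
    exists_bounds_of_tendsto_pos hpos one_pos (tendsto_Gamma_nat_add_ratio ha hb)
  refine ⟨c, hc, C, hC, fun n => ?_⟩
  have hn : (0 : ℝ) < (1 + n : ℝ) ^ (a - b) := by positivity
  rw [← le_div_iff₀ hn, ← div_le_iff₀ hn]
  exact h n

end GammaRatio

/-! ### The weighted hyperbolic cosine series -/

section WeightedCosh

open scoped Nat

/-- The series `∑ₖ x²ᵏ / (2k)! · (1 + k)⁻ᵖ`. By the duplication formula for `Γ`, the power series
of `I_ν` is comparable to it term by term when `p = ν + 1/2`. -/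
noncomputable def weightedCosh (p x : ℝ) : ℝ :=
  ∑' k : ℕ, x ^ (2 * k) / (2 * k)! * (1 + k : ℝ) ^ (-p)

variable {p x : ℝ}

theorem summable_weightedCosh (hp : 0 ≤ p) (x : ℝ) :
    Summable fun k : ℕ => x ^ (2 * k) / (2 * k)! * (1 + k : ℝ) ^ (-p) := by
  have hterm (k : ℕ) : 0 ≤ x ^ (2 * k) / (2 * k)! :=
    div_nonneg ((even_two_mul k).pow_nonneg x) (by positivity)
  refine Summable.of_nonneg_of_le (fun k => mul_nonneg (hterm k) (by positivity))
    (fun k => mul_le_of_le_one_right (hterm k) ?_) (hasSum_cosh x).summable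
  exact rpow_le_one_of_one_le_of_nonpos (by simp) (neg_nonpos.2 hp)

theorem hasSum_nat_mul_cosh (x : ℝ) :
    HasSum (fun k : ℕ => k * (x ^ (2 * k) / (2 * k)!)) (x / 2 * sinh x) := by
  rw [← hasSum_nat_add_iff' 1]
  simp only [Finset.range_one, Finset.sum_singleton, Nat.cast_zero, zero_mul, sub_zero]
  refine ((hasSum_sinh x).mul_left (x / 2)).congr_fun fun k => ?_
  rw [show 2 * (k + 1) = 2 * k + 1 + 1 by ring, Nat.factorial_succ (2 * k + 1)]
  push_cast
  field_simp
  ring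

-- Jensen's inequality for `y ↦ y⁻ᵖ` and the weights `x²ᵏ / (2k)!`, under which `1 + k` has
-- mean `1 + (x / 2) tanh x ≤ 1 + x / 2 =: m`.
theorem le_weightedCosh (hp : 0 ≤ p) (hx : 0 < x) :
    1 / 2 * (exp x * (1 + x) ^ (-p)) ≤ weightedCosh p x := by
  set m := 1 + x / 2 with hm_def
  have hm : 0 < m := by positivity
  have htangent := (((hasSum_cosh x).mul_left (1 - p * (1 / m - 1))).sub
    ((hasSum_nat_mul_cosh x).mul_left (p / m))).mul_left (m ^ (-p))
  have hjensen := hasSum_le (fun k => ?_) htangent (summable_weightedCosh hp x).hasSum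
  · have hcosh : exp x / 2 ≤ cosh x := by
      rw [cosh_eq]
      linarith [exp_pos (-x)]
    have hmean : cosh x ≤ (1 - p * (1 / m - 1)) * cosh x - p / m * (x / 2 * sinh x) := by
      have hdiff : (1 - p * (1 / m - 1)) * cosh x - p / m * (x / 2 * sinh x) =
          cosh x + p / m * (x / 2) * (cosh x - sinh x) := by
        rw [hm_def]
        field_simp
        ring
      rw [hdiff]
      exact le_add_of_nonneg_right
        (mul_nonneg (by positivity) (sub_nonneg.2 (sinh_lt_cosh x).le))
    calc 1 / 2 * (exp x * (1 + x) ^ (-p)) = (1 + x) ^ (-p) * (exp x / 2) := by ring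
      _ ≤ m ^ (-p) * ((1 - p * (1 / m - 1)) * cosh x - p / m * (x / 2 * sinh x)) :=
        mul_le_mul (rpow_le_rpow_of_nonpos hm (by linarith) (neg_nonpos.2 hp))
          (hcosh.trans hmean) (by positivity) (by positivity)
      _ ≤ weightedCosh p x := hjensen
  · calc m ^ (-p) * ((1 - p * (1 / m - 1)) * (x ^ (2 * k) / (2 * k)!) -
          p / m * (k * (x ^ (2 * k) / (2 * k)!)))
        = x ^ (2 * k) / (2 * k)! * (m ^ (-p) * (1 - p * ((1 + k) / m - 1))) := by ring
      _ ≤ x ^ (2 * k) / (2 * k)! * (1 + k : ℝ) ^ (-p) := by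
        gcongr
        exact tangent_le_rpow_neg hm (by positivity) hp

theorem pow_mul_pow_div_factorial_le (hx : 0 ≤ x) (j n : ℕ) :
    x ^ n * (x ^ j / j !) ≤ n ! * (j + 1 : ℝ) ^ n * (x ^ (j + n) / (j + n)!) := by
  have hfact : ((j + n)! : ℝ) ≤ j ! * (n ! * (j + 1 : ℝ) ^ n) := by
    rw [← Nat.factorial_mul_ascFactorial]
    exact_mod_cast Nat.mul_le_mul_left _ (Nat.ascFactorial_le_factorial_mul_pow (j + 1) n)
  rw [← mul_div_assoc, ← mul_div_assoc, div_le_div_iff₀ (by positivity) (by positivity)]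
  calc x ^ n * x ^ j * (j + n)! ≤ x ^ n * x ^ j * (j ! * (n ! * (j + 1 : ℝ) ^ n)) := by gcongr
    _ = n ! * (j + 1 : ℝ) ^ n * x ^ (j + n) * j ! := by rw [pow_add]; ring

theorem one_add_pow_mul_cosh_term_le (hx : 0 ≤ x) (n k : ℕ) :
    (1 + x) ^ n * (x ^ (2 * k) / (2 * k)!) ≤
      (1 + k : ℝ) ^ n * (2 ^ n * (x ^ (2 * k) / (2 * k)!) +
        4 ^ n * n ! * (x ^ (2 * k + n) / (2 * k + n)!)) := by
  set w := x ^ (2 * k) / (2 * k)!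
  set v := x ^ (2 * k + n) / (2 * k + n)!
  have : 0 ≤ w := by positivity
  have hk : (1 : ℝ) ≤ (1 + k : ℝ) ^ n := one_le_pow₀ (by simp)
  have hshift : x ^ n * w ≤ n ! * (2 ^ n * (1 + k : ℝ) ^ n) * v :=
    calc x ^ n * w ≤ n ! * ((2 * k : ℕ) + 1 : ℝ) ^ n * v := pow_mul_pow_div_factorial_le hx _ n
      _ ≤ n ! * (2 * (1 + k : ℝ)) ^ n * v := by
        gcongr
        push_cast
        linarith
      _ = n ! * (2 ^ n * (1 + k : ℝ) ^ n) * v := by rw [mul_pow]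
  have hbinom : (1 + x) ^ n ≤ 2 ^ n * (1 + x ^ n) := by
    simpa only [rpow_natCast] using one_add_rpow_le hx n.cast_nonneg
  calc (1 + x) ^ n * w ≤ 2 ^ n * (1 + x ^ n) * w := by gcongr
    _ = 2 ^ n * w + 2 ^ n * (x ^ n * w) := by ring
    _ ≤ (1 + k : ℝ) ^ n * (2 ^ n * w) + 2 ^ n * (n ! * (2 ^ n * (1 + k : ℝ) ^ n) * v) :=
        add_le_add (le_mul_of_one_le_left (by positivity) hk)
          (mul_le_mul_of_nonneg_left hshift (by positivity))
    _ = (1 + k : ℝ) ^ n * (2 ^ n * w + 4 ^ n * n ! * v) := by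
        rw [show (4 : ℝ) ^ n = 2 ^ n * 2 ^ n by rw [← mul_pow]; norm_num]
        ring

theorem weightedCosh_term_le {n : ℕ} (hp : 0 ≤ p) (hn : p ≤ n) (hx : 0 ≤ x) (k : ℕ) :
    x ^ (2 * k) / (2 * k)! * (1 + k : ℝ) ^ (-p) ≤
      (1 + x) ^ (-p) * ((1 + 2 ^ n) * (x ^ (2 * k) / (2 * k)!) +
        4 ^ n * n ! * (x ^ (2 * k + n) / (2 * k + n)!)) := by
  set w := x ^ (2 * k) / (2 * k)!
  have : 0 ≤ w := by positivity
  set y := (1 + x) / (1 + k) with hy_def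
  have hpow : (1 + k : ℝ) ^ (-p) = (1 + x) ^ (-p) * y ^ p := by
    rw [hy_def, div_rpow (by positivity) (by positivity), rpow_neg (by positivity),
      rpow_neg (by positivity)]
    field_simp
  have hyn : y ^ n * w ≤ 2 ^ n * w + 4 ^ n * n ! * (x ^ (2 * k + n) / (2 * k + n)!) := by
    rw [hy_def, div_pow, div_mul_eq_mul_div, div_le_iff₀' (by positivity)]
    exact one_add_pow_mul_cosh_term_le hx n k
  calc w * (1 + k : ℝ) ^ (-p) = (1 + x) ^ (-p) * (y ^ p * w) := by rw [hpow]; ring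
    _ ≤ (1 + x) ^ (-p) * ((1 + y ^ n) * w) := by
        gcongr
        exact rpow_le_one_add_pow (by positivity) hp hn
    _ ≤ (1 + x) ^ (-p) * ((1 + 2 ^ n) * w +
          4 ^ n * n ! * (x ^ (2 * k + n) / (2 * k + n)!)) := by
        gcongr ?_ * ?_
        linarith

theorem exists_weightedCosh_le (hp : 0 ≤ p) :
    ∃ C > 0, ∀ x, 0 < x → weightedCosh p x ≤ C * (exp x * (1 + x) ^ (-p)) := by
  obtain ⟨n, hn⟩ := exists_nat_ge p
  refine ⟨1 + 2 ^ n + 4 ^ n * n !, by positivity, fun x hx => ?_⟩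
  have hcosh : cosh x ≤ exp x := by
    rw [cosh_eq]
    linarith [exp_le_exp.2 (show -x ≤ x by linarith)]
  have hexp : HasSum (fun j : ℕ => x ^ j / (j ! : ℝ)) (exp x) := by
    rw [exp_eq_exp_ℝ]
    exact NormedSpace.expSeries_div_hasSum_exp x
  have hinj : Function.Injective fun k : ℕ => 2 * k + n :=
    (add_left_injective n).comp (mul_right_injective₀ two_ne_zero)
  have hsub : ∑' k : ℕ, x ^ (2 * k + n) / ((2 * k + n)! : ℝ) ≤ exp x :=
    hexp.tsum_eq ▸ tsum_comp_le_tsum_of_inj hexp.summable (fun j => by positivity) hinj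
  have hmajorant := (((hasSum_cosh x).mul_left (1 + 2 ^ n)).add
    ((hexp.summable.comp_injective hinj).hasSum.mul_left (4 ^ n * n ! : ℝ))).mul_left
      ((1 + x) ^ (-p))
  calc weightedCosh p x ≤ _ := hasSum_le (weightedCosh_term_le hp hn hx.le)
        (summable_weightedCosh hp x).hasSum hmajorant
    _ ≤ (1 + x) ^ (-p) * ((1 + 2 ^ n) * exp x + 4 ^ n * n ! * exp x) := by
        gcongr
        exact hsub
    _ = (1 + 2 ^ n + 4 ^ n * n !) * (exp x * (1 + x) ^ (-p)) := by ring

end WeightedCosh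

/-! ### Two-sided bounds for the Bessel function and the Bessel heat kernel -/

section Bessel

open scoped Nat

theorem mul_tsum_le_tsum_and_tsum_le_mul {ι : Type*} {u v : ι → ℝ} {c C : ℝ} (hc : 0 ≤ c)
    (hv0 : ∀ i, 0 ≤ v i) (hv : Summable v) (h : ∀ i, c * v i ≤ u i ∧ u i ≤ C * v i) :
    c * ∑' i, v i ≤ ∑' i, u i ∧ ∑' i, u i ≤ C * ∑' i, v i := by
  have hu : Summable u := (hv.mul_left C).of_nonneg_of_le
    (fun i => (mul_nonneg hc (hv0 i)).trans (h i).1) fun i => (h i).2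
  rw [← tsum_mul_left, ← tsum_mul_left]
  exact ⟨(hv.mul_left c).tsum_le_tsum (fun i => (h i).1) hu,
    hu.tsum_le_tsum (fun i => (h i).2) (hv.mul_left C)⟩

theorem Gamma_nat_add_half_mul_factorial (k : ℕ) :
    Gamma (k + 1 / 2) * k ! = (2 * k)! * √π / 2 ^ (2 * k) := by
  have h := Gamma_mul_Gamma_add_half ((k : ℝ) + 1 / 2)
  rw [show (k : ℝ) + 1 / 2 + 1 / 2 = k + 1 by ring, Gamma_nat_eq_factorial,
    show 2 * ((k : ℝ) + 1 / 2) = ((2 * k : ℕ) : ℝ) + 1 by push_cast; ring,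
    Gamma_nat_eq_factorial, sub_add_cancel_right, rpow_neg zero_le_two, rpow_natCast] at h
  rw [h]
  ring

theorem besselI_eq_tsum_Gamma_ratio (ν : ℝ) {x : ℝ} (hx : 0 < x) :
    besselI ν x = (x / 2) ^ ν / √π *
      ∑' k : ℕ, x ^ (2 * k) / (2 * k)! * (Gamma (k + 1 / 2) / Gamma (k + (ν + 1))) := by
  rw [besselI, ← tsum_mul_left]
  refine tsum_congr fun k => ?_
  have hΓ : Gamma (k + 1 / 2) = (2 * k)! * √π / 2 ^ (2 * k) / k ! :=
    eq_div_of_mul_eq (by positivity) (Gamma_nat_add_half_mul_factorial k)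
  rw [hΓ, add_comm (2 * (k : ℝ)), rpow_add (by positivity), ← Nat.cast_ofNat, ← Nat.cast_mul,
    rpow_natCast, div_pow, add_assoc]
  field_simp

theorem exists_besselI_bounds {ν : ℝ} (hν : -(1 / 2) ≤ ν) :
    ∃ c > 0, ∃ C > 0, ∀ x, 0 < x →
      c * (x ^ ν * (exp x * (1 + x) ^ (-(ν + 1 / 2)))) ≤ besselI ν x ∧
      besselI ν x ≤ C * (x ^ ν * (exp x * (1 + x) ^ (-(ν + 1 / 2)))) := by
  have hp : 0 ≤ ν + 1 / 2 := by linarith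
  obtain ⟨c, hc, C, hC, hratio⟩ :=
    exists_Gamma_nat_add_ratio_bounds (a := 1 / 2) (b := ν + 1) (by norm_num) (by linarith)
  obtain ⟨D, hD, hcosh⟩ := exists_weightedCosh_le hp
  set A : ℝ := 2 ^ (-ν) / √π
  have : 0 < A := by positivity
  refine ⟨A * (c * (1 / 2)), by positivity, A * (C * D), by positivity, fun x hx => ?_⟩
  have hterm (k : ℕ) : 0 ≤ x ^ (2 * k) / ((2 * k)! : ℝ) := by positivity
  obtain ⟨hlower, hupper⟩ := mul_tsum_le_tsum_and_tsum_le_mul hc.le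
    (fun k => mul_nonneg (hterm k) (by positivity)) (summable_weightedCosh hp x) (C := C)
    (u := fun k : ℕ => x ^ (2 * k) / (2 * k)! * (Gamma (k + 1 / 2) / Gamma (k + (ν + 1))))
    fun k => by
      rw [mul_left_comm, mul_left_comm C, show -(ν + 1 / 2) = 1 / 2 - (ν + 1) by ring]
      exact ⟨mul_le_mul_of_nonneg_left (hratio k).1 (hterm k),
        mul_le_mul_of_nonneg_left (hratio k).2 (hterm k)⟩
  have hscale : (x / 2) ^ ν / √π = A * x ^ ν := by
    rw [div_rpow hx.le zero_le_two, div_eq_mul_inv (x ^ ν), ← rpow_neg zero_le_two]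
    ring
  set E := exp x * (1 + x) ^ (-(ν + 1 / 2))
  rw [besselI_eq_tsum_Gamma_ratio ν hx, hscale]
  constructor
  · calc A * (c * (1 / 2)) * (x ^ ν * E) = A * x ^ ν * (c * (1 / 2 * E)) := by ring
      _ ≤ _ := by
        gcongr
        exact (mul_le_mul_of_nonneg_left (le_weightedCosh hp hx) hc.le).trans hlower
  · calc _ ≤ A * x ^ ν * (C * (D * E)) := by
          gcongr
          exact hupper.trans (mul_le_mul_of_nonneg_left (hcosh x hx) hC.le)
      _ = A * (C * D) * (x ^ ν * E) := by ring

theorem besselI_nonneg {ν x : ℝ} (hν : -1 < ν) (hx : 0 ≤ x) : 0 ≤ besselI ν x :=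
  tsum_nonneg fun k => div_nonneg (by positivity) <|
    mul_nonneg (by positivity) (Gamma_nonneg_of_nonneg (by linarith [k.cast_nonneg (α := ℝ)]))

theorem measurable_besselI (ν : ℝ) : Measurable (besselI ν) := by
  unfold besselI
  fun_prop

/-- The elementary function to which the Bessel heat kernel `p_ζ^{(2)}(τ,r,s)` is comparable. -/
noncomputable def gaussProfile (ζ τ r s : ℝ) : ℝ :=
  τ ^ (-(1 / 2) : ℝ) * (2 * τ + r * s) ^ (-ζ) * exp (-(r - s) ^ 2 / (4 * τ))

variable {ζ τ r s : ℝ}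

theorem besselHeat_nonneg (hζ : -(1 / 2) < ζ) (hτ : 0 < τ) (hr : 0 < r) (hs : 0 < s) :
    0 ≤ besselHeat ζ τ r s :=
  mul_nonneg (by positivity) (besselI_nonneg (by linarith) (by positivity))

theorem besselHeat_comm (ζ τ r s : ℝ) : besselHeat ζ τ r s = besselHeat ζ τ s r := by
  simp only [besselHeat, mul_comm r s, add_comm (r ^ 2)]

theorem measurable_besselHeat (ζ r s : ℝ) : Measurable fun τ => besselHeat ζ τ r s := by
  unfold besselHeat
  have := measurable_besselI (ζ - 1 / 2)
  fun_prop

theorem besselHeat_prefactor_mul_eq_gaussProfile (ζ : ℝ) (hτ : 0 < τ) (hr : 0 < r) (hs : 0 < s) :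
    (r * s) ^ ((1 : ℝ) / 2 - ζ) / (2 * τ) * exp (-(r ^ 2 + s ^ 2) / (4 * τ)) *
      ((r * s / (2 * τ)) ^ (ζ - 1 / 2) *
        (exp (r * s / (2 * τ)) * (1 + r * s / (2 * τ)) ^ (-ζ))) =
      2 ^ (-(1 / 2) : ℝ) * gaussProfile ζ τ r s := by
  have hrs : 0 < r * s := mul_pos hr hs
  have h2τ : 0 < 2 * τ := by positivity
  have hexp : exp (-(r ^ 2 + s ^ 2) / (4 * τ)) * exp (r * s / (2 * τ)) =
      exp (-(r - s) ^ 2 / (4 * τ)) := by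
    rw [← exp_add]
    congr 1
    field_simp
    ring
  have hshift : (1 + r * s / (2 * τ)) ^ (-ζ) = (2 * τ + r * s) ^ (-ζ) * (2 * τ) ^ ζ := by
    rw [show 1 + r * s / (2 * τ) = (2 * τ + r * s) / (2 * τ) by field_simp,
      div_rpow (by positivity) h2τ.le, rpow_neg h2τ.le, div_inv_eq_mul]
  have hcancel : (r * s) ^ ((1 : ℝ) / 2 - ζ) * (r * s / (2 * τ)) ^ (ζ - 1 / 2) =
      (2 * τ) ^ ((1 : ℝ) / 2 - ζ) := by
    rw [← neg_sub ζ, rpow_neg hrs.le, rpow_neg h2τ.le, div_rpow hrs.le h2τ.le]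
    field_simp
  have htime : (2 * τ) ^ ((1 : ℝ) / 2 - ζ) * (2 * τ) ^ ζ / (2 * τ) =
      2 ^ (-(1 / 2) : ℝ) * τ ^ (-(1 / 2) : ℝ) := by
    rw [← rpow_add h2τ, ← rpow_sub_one h2τ.ne', ← mul_rpow zero_le_two hτ.le]
    norm_num
  calc _ = (r * s) ^ ((1 : ℝ) / 2 - ζ) * (r * s / (2 * τ)) ^ (ζ - 1 / 2) / (2 * τ) *
        (1 + r * s / (2 * τ)) ^ (-ζ) *
        (exp (-(r ^ 2 + s ^ 2) / (4 * τ)) * exp (r * s / (2 * τ))) := by ring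
    _ = (2 * τ) ^ ((1 : ℝ) / 2 - ζ) * (2 * τ) ^ ζ / (2 * τ) * (2 * τ + r * s) ^ (-ζ) *
        exp (-(r - s) ^ 2 / (4 * τ)) := by
      rw [hcancel, hshift, hexp]
      ring
    _ = 2 ^ (-(1 / 2) : ℝ) * gaussProfile ζ τ r s := by
      rw [htime, gaussProfile]
      ring

theorem exists_besselHeat_bounds (hζ : 0 ≤ ζ) :
    ∃ c > 0, ∃ C > 0, ∀ τ r s, 0 < τ → 0 < r → 0 < s →
      c * gaussProfile ζ τ r s ≤ besselHeat ζ τ r s ∧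
      besselHeat ζ τ r s ≤ C * gaussProfile ζ τ r s := by
  obtain ⟨c, hc, C, hC, h⟩ := exists_besselI_bounds (ν := ζ - 1 / 2) (by linarith)
  refine ⟨c * 2 ^ (-(1 / 2) : ℝ), by positivity, C * 2 ^ (-(1 / 2) : ℝ), by positivity,
    fun τ r s hτ hr hs => ?_⟩
  have hprefactor : 0 ≤ (r * s) ^ ((1 : ℝ) / 2 - ζ) / (2 * τ) *
      exp (-(r ^ 2 + s ^ 2) / (4 * τ)) := by positivity
  obtain ⟨hlower, hupper⟩ := h (r * s / (2 * τ)) (by positivity)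
  rw [sub_add_cancel] at hlower hupper
  rw [mul_assoc, mul_assoc, ← besselHeat_prefactor_mul_eq_gaussProfile ζ hτ hr hs,
    mul_left_comm c, mul_left_comm C]
  exact ⟨mul_le_mul_of_nonneg_left hlower hprefactor, mul_le_mul_of_nonneg_left hupper hprefactor⟩

end Bessel

/-! ### Bounds for the Gaussian profile -/

section GaussProfile

variable {ζ τ r s : ℝ}

theorem gaussProfile_le_rpow (hζ : 0 ≤ ζ) (hτ : 0 < τ) (hr : 0 < r) (hs : 0 < s) :
    gaussProfile ζ τ r s ≤ (r * s) ^ (-ζ) * τ ^ (-(1 / 2) : ℝ) := by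
  have hrs : 0 < r * s := mul_pos hr hs
  have hexp : exp (-(r - s) ^ 2 / (4 * τ)) ≤ 1 :=
    exp_le_one_iff.2 (div_nonpos_of_nonpos_of_nonneg (neg_nonpos.2 (sq_nonneg _)) (by positivity))
  calc gaussProfile ζ τ r s ≤ τ ^ (-(1 / 2) : ℝ) * (r * s) ^ (-ζ) * 1 := by
        refine mul_le_mul ?_ hexp (exp_pos _).le (by positivity)
        gcongr ?_ * ?_
        exact rpow_le_rpow_of_nonpos hrs (by linarith) (neg_nonpos.2 hζ)
    _ = (r * s) ^ (-ζ) * τ ^ (-(1 / 2) : ℝ) := by ring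

-- Half of the Gaussian factor pays for replacing `r * s` by `(r + s) ^ 2`.
theorem exists_gaussProfile_le_mul_exp (hζ : 0 ≤ ζ) :
    ∃ C > 0, ∀ τ r s, 0 < τ → 0 < r → 0 < s →
      gaussProfile ζ τ r s ≤ C * (τ ^ (-(1 / 2) : ℝ) * (τ + (r + s) ^ 2) ^ (-ζ) *
        exp (-(1 / 8 * ((r - s) ^ 2 / τ)))) := by
  refine ⟨4 ^ ζ * (1 + ζ / (1 / 8)) ^ ζ, by positivity, fun τ r s hτ hr hs => ?_⟩
  set v := (r - s) ^ 2 / τ with hv_def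
  have hv : 0 ≤ v := by positivity
  have hrs : 0 < r * s := mul_pos hr hs
  have hbase : τ + (r + s) ^ 2 ≤ 4 * (1 + v) * (2 * τ + r * s) := by
    have hvτ : v * τ = (r - s) ^ 2 := div_mul_cancel₀ _ hτ.ne'
    nlinarith [mul_nonneg hv hrs.le]
  have hexp : exp (-(r - s) ^ 2 / (4 * τ)) = exp (-(1 / 8 * v)) * exp (-(1 / 8 * v)) := by
    rw [← exp_add, hv_def]
    congr 1
    field_simp
    ring
  calc gaussProfile ζ τ r s
      ≤ τ ^ (-(1 / 2) : ℝ) * ((4 * (1 + v)) ^ ζ * (τ + (r + s) ^ 2) ^ (-ζ)) *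
        (exp (-(1 / 8 * v)) * exp (-(1 / 8 * v))) := by
        rw [gaussProfile, hexp]
        gcongr
        exact rpow_neg_le_mul_rpow_neg (by positivity) (by positivity) hbase hζ
    _ = 4 ^ ζ * ((1 + v) ^ ζ * exp (-(1 / 8 * v))) *
        (τ ^ (-(1 / 2) : ℝ) * (τ + (r + s) ^ 2) ^ (-ζ) * exp (-(1 / 8 * v))) := by
        rw [mul_rpow zero_le_four (by positivity)]
        ring
    _ ≤ _ := by
        gcongr
        exact one_add_rpow_mul_exp_neg_le hζ (by norm_num) hv

theorem exists_gaussProfile_le_rpow_add_rpow (hζ : 0 ≤ ζ) :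
    ∃ C > 0, ∀ X τ r s, 0 < X → 0 < τ → 0 < r → 0 < s →
      gaussProfile ζ τ r s ≤ C * (X + r + s) ^ (-(2 * ζ)) *
        (τ ^ (-(1 / 2) : ℝ) + X ^ (2 * ζ) * τ ^ (-(1 / 2 + ζ))) := by
  obtain ⟨C, hC, h⟩ := exists_gaussProfile_le_mul_exp hζ
  refine ⟨C * (2 ^ ζ * 2 ^ ζ), by positivity, fun X τ r s hX hτ hr hs => ?_⟩
  set y := X ^ 2 / τ with hy_def
  have hy : 0 < y := by positivity
  have hbase : (X + r + s) ^ 2 ≤ 2 * (1 + y) * (τ + (r + s) ^ 2) := by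
    have hyτ : y * τ = X ^ 2 := div_mul_cancel₀ _ hτ.ne'
    nlinarith [sq_nonneg (X - (r + s)), mul_nonneg hy.le (sq_nonneg (r + s))]
  have hpow : (2 * (1 + y)) ^ ζ ≤ 2 ^ ζ * (2 ^ ζ * (1 + X ^ (2 * ζ) * τ ^ (-ζ))) := by
    have hyζ : X ^ (2 * ζ) * τ ^ (-ζ) = y ^ ζ := by
      rw [hy_def, div_rpow (by positivity) hτ.le, rpow_mul hX.le, rpow_two, rpow_neg hτ.le,
        div_eq_mul_inv]
    rw [mul_rpow zero_le_two (by positivity), hyζ]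
    gcongr
    exact one_add_rpow_le hy.le hζ
  have hexp : exp (-(1 / 8 * ((r - s) ^ 2 / τ))) ≤ 1 :=
    exp_le_one_iff.2 (neg_nonpos.2 (by positivity))
  calc gaussProfile ζ τ r s ≤ C * (τ ^ (-(1 / 2) : ℝ) * (τ + (r + s) ^ 2) ^ (-ζ) * 1) :=
        (h τ r s hτ hr hs).trans (by gcongr)
    _ ≤ C * (τ ^ (-(1 / 2) : ℝ) * (2 ^ ζ * (2 ^ ζ * (1 + X ^ (2 * ζ) * τ ^ (-ζ))) *
        (X + r + s) ^ (-(2 * ζ))) * 1) := by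
        gcongr
        rw [← sq_rpow_neg (by positivity)]
        exact (rpow_neg_le_mul_rpow_neg (by positivity) (by positivity) hbase hζ).trans
          (by gcongr)
    _ = _ := by
        rw [neg_add, rpow_add hτ]
        ring

theorem exists_gaussProfile_le_one_sub_exp (hζ : 0 ≤ ζ) :
    ∃ C > 0, ∀ τ r s, 0 < τ → 0 < r → 0 < s → r ≠ s →
      gaussProfile ζ τ r s ≤ C * (|r - s|⁻¹ * (r + s) ^ (-(2 * ζ))) *
        (1 - exp (-τ * (|r - s| ^ 2)⁻¹)) := by
  obtain ⟨C, hC, h⟩ := exists_gaussProfile_le_mul_exp hζ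
  refine ⟨C * 17 ^ 2, by positivity, fun τ r s hτ hr hs hne => ?_⟩
  set d := |r - s| with hd_def
  have hd : 0 < d := abs_pos.2 (sub_ne_zero.2 hne)
  set x := τ * (d ^ 2)⁻¹ with hx_def
  have hx : 0 < x := by positivity
  have hspace : (τ + (r + s) ^ 2) ^ (-ζ) ≤ (r + s) ^ (-(2 * ζ)) := by
    rw [← sq_rpow_neg (by positivity)]
    exact rpow_le_rpow_of_nonpos (by positivity) (by linarith) (neg_nonpos.2 hζ)
  have htime : τ ^ (-(1 / 2) : ℝ) = d⁻¹ * x ^ (-(1 / 2) : ℝ) := by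
    rw [hx_def, mul_rpow hτ.le (by positivity), inv_rpow (by positivity), sq_rpow_neg hd.le]
    norm_num [rpow_neg_one]
    field_simp
  have hinv : (r - s) ^ 2 / τ = x⁻¹ := by
    rw [hx_def, hd_def, sq_abs, mul_inv, inv_inv, inv_mul_eq_div]
  calc gaussProfile ζ τ r s ≤ C * (τ ^ (-(1 / 2) : ℝ) * (r + s) ^ (-(2 * ζ)) *
        exp (-(1 / 8 * ((r - s) ^ 2 / τ)))) := (h τ r s hτ hr hs).trans (by gcongr)
    _ = C * (d⁻¹ * (r + s) ^ (-(2 * ζ))) * (x ^ (-(1 / 2) : ℝ) * exp (-(1 / 8 * x⁻¹))) := by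
        rw [hinv, htime]
        ring
    _ ≤ C * (d⁻¹ * (r + s) ^ (-(2 * ζ))) * (17 ^ 2 * (1 - exp (-x))) :=
        mul_le_mul_of_nonneg_left (rpow_neg_half_mul_exp_neg_inv_le hx) (by positivity)
    _ = _ := by
        rw [neg_mul, ← hx_def]
        ring

theorem le_gaussProfile {ε M X : ℝ} (hζ : 0 ≤ ζ) (hε : 0 < ε) (hM : 1 ≤ M) (hX : 0 < X)
    (hτ : τ ∈ Icc (ε * X ^ 2) (M * X ^ 2)) (hr : 0 < r) (hs : 0 < s) (hd : |r - s| ≤ X) :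
    M ^ (-(1 / 2) : ℝ) * (2 * M) ^ (-ζ) * exp (-(1 / (4 * ε))) *
      (X⁻¹ * (X + r + s) ^ (-(2 * ζ))) ≤ gaussProfile ζ τ r s := by
  obtain ⟨hετ, hτM⟩ := hτ
  have hM0 : 0 < M := one_pos.trans_le hM
  have hτ0 : 0 < τ := lt_of_lt_of_le (by positivity) hετ
  have hrs : 0 < r * s := mul_pos hr hs
  have htime : M ^ (-(1 / 2) : ℝ) * X⁻¹ ≤ τ ^ (-(1 / 2) : ℝ) := by
    have hXinv : X⁻¹ = (X ^ 2) ^ (-(1 / 2) : ℝ) := by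
      rw [sq_rpow_neg hX.le]
      norm_num [rpow_neg_one]
    rw [hXinv, ← mul_rpow hM0.le (by positivity)]
    exact rpow_le_rpow_of_nonpos hτ0 hτM (by norm_num)
  have hspace : (2 * M) ^ (-ζ) * (X + r + s) ^ (-(2 * ζ)) ≤ (2 * τ + r * s) ^ (-ζ) := by
    rw [← sq_rpow_neg (by positivity), ← mul_rpow (by positivity) (by positivity)]
    refine rpow_le_rpow_of_nonpos (by positivity) ?_ (neg_nonpos.2 hζ)
    have hsq : X ^ 2 + r * s ≤ (X + r + s) ^ 2 := by nlinarith [mul_pos hX hr, mul_pos hX hs]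
    nlinarith
  have hexp : exp (-(1 / (4 * ε))) ≤ exp (-(r - s) ^ 2 / (4 * τ)) := by
    rw [exp_le_exp, neg_div, neg_le_neg_iff, div_le_div_iff₀ (by positivity) (by positivity)]
    have : (r - s) ^ 2 ≤ X ^ 2 := sq_abs (r - s) ▸ pow_le_pow_left₀ (abs_nonneg _) hd 2
    nlinarith
  calc _ = M ^ (-(1 / 2) : ℝ) * X⁻¹ * ((2 * M) ^ (-ζ) * (X + r + s) ^ (-(2 * ζ))) *
        exp (-(1 / (4 * ε))) := by ring
    _ ≤ gaussProfile ζ τ r s := by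
        unfold gaussProfile
        gcongr

end GaussProfile

/-! ### Moments of the stable subordinator from its Laplace transform -/

namespace IsStableSubordinatorDensity

variable {α : ℝ} {σ : ℝ → ℝ → ℝ} {t l : ℝ}

theorem nonneg (hσ : IsStableSubordinatorDensity α σ) (ht : 0 < t) {τ : ℝ} (hτ : 0 < τ) :
    0 ≤ σ t τ :=
  hσ.1 t ht τ hτ

theorem measurable (hσ : IsStableSubordinatorDensity α σ) (ht : 0 < t) : Measurable (σ t) :=
  hσ.2.1 t ht

theorem integral_exp_mul (hσ : IsStableSubordinatorDensity α σ) (ht : 0 < t) (hl : 0 ≤ l) :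
    ∫ τ in Ioi 0, exp (-τ * l) * σ t τ = exp (-t * l ^ (α / 2)) :=
  hσ.2.2 t l ht hl

theorem integrableOn_exp_mul (hσ : IsStableSubordinatorDensity α σ) (ht : 0 < t) (hl : 0 ≤ l) :
    IntegrableOn (fun τ => exp (-τ * l) * σ t τ) (Ioi 0) :=
  Integrable.of_integral_ne_zero ((hσ.integral_exp_mul ht hl).trans_ne (exp_ne_zero _))

theorem integrableOn (hσ : IsStableSubordinatorDensity α σ) (ht : 0 < t) :
    IntegrableOn (σ t) (Ioi 0) := by
  simpa using hσ.integrableOn_exp_mul ht le_rfl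

theorem integral_eq_one (hσ : IsStableSubordinatorDensity α σ) (hα : 0 < α) (ht : 0 < t) :
    ∫ τ in Ioi 0, σ t τ = 1 := by
  simpa [zero_rpow (half_pos hα).ne'] using hσ.integral_exp_mul ht le_rfl

theorem integrableOn_one_sub_exp_mul (hσ : IsStableSubordinatorDensity α σ) (ht : 0 < t)
    (hl : 0 ≤ l) : IntegrableOn (fun τ => (1 - exp (-τ * l)) * σ t τ) (Ioi 0) := by
  simp only [sub_mul, one_mul]
  exact (hσ.integrableOn ht).sub (hσ.integrableOn_exp_mul ht hl)

theorem integral_one_sub_exp_mul (hσ : IsStableSubordinatorDensity α σ) (hα : 0 < α) (ht : 0 < t)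
    (hl : 0 ≤ l) :
    ∫ τ in Ioi 0, (1 - exp (-τ * l)) * σ t τ = 1 - exp (-(t * l ^ (α / 2))) := by
  simp only [sub_mul, one_mul]
  rw [integral_sub (hσ.integrableOn ht) (hσ.integrableOn_exp_mul ht hl), hσ.integral_eq_one hα ht,
    hσ.integral_exp_mul ht hl, neg_mul]

theorem integral_one_sub_exp_mul_le (hσ : IsStableSubordinatorDensity α σ) (hα : 0 < α)
    (ht : 0 < t) (hl : 0 ≤ l) :
    ∫ τ in Ioi 0, (1 - exp (-τ * l)) * σ t τ ≤ t * l ^ (α / 2) := by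
  rw [hσ.integral_one_sub_exp_mul hα ht hl]
  linarith [one_sub_le_exp_neg (t * l ^ (α / 2))]

theorem integrable_rpow_mul_exp_mul_prod (hσ : IsStableSubordinatorDensity α σ) (hα : 0 < α)
    {a : ℝ} (ha : 0 < a) (ht : 0 < t) :
    Integrable (fun p : ℝ × ℝ => p.2 ^ (a - 1) * (exp (-p.1 * p.2) * σ t p.1))
      ((volume.restrict (Ioi 0)).prod (volume.restrict (Ioi 0))) := by
  have hmeas : Measurable fun p : ℝ × ℝ => p.2 ^ (a - 1) * (exp (-p.1 * p.2) * σ t p.1) := by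
    have := hσ.measurable ht
    fun_prop
  rw [integrable_prod_iff' hmeas.aestronglyMeasurable]
  constructor
  · filter_upwards [ae_restrict_mem measurableSet_Ioi] with l hl
    exact (hσ.integrableOn_exp_mul ht (le_of_lt hl)).const_mul (l ^ (a - 1))
  · refine (integrableOn_rpow_mul_exp_neg_mul_rpow (s := a - 1) (by linarith) (half_pos hα)
      ht).congr ?_
    filter_upwards [ae_restrict_mem measurableSet_Ioi] with l (hl : 0 < l)
    rw [← hσ.integral_exp_mul ht hl.le, ← integral_const_mul]
    refine setIntegral_congr_fun measurableSet_Ioi fun τ hτ => ?_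
    have := hσ.nonneg ht hτ
    exact (norm_of_nonneg (by positivity)).symm

theorem integral_rpow_mul_exp_mul_left (σ : ℝ → ℝ → ℝ) (t : ℝ) {a τ : ℝ} (ha : 0 < a)
    (hτ : 0 < τ) :
    ∫ l in Ioi 0, l ^ (a - 1) * (exp (-τ * l) * σ t τ) = Gamma a * (τ ^ (-a) * σ t τ) := by
  simp only [← mul_assoc, neg_mul]
  rw [integral_mul_const, integral_rpow_mul_exp_neg_mul_Ioi ha hτ, one_div, inv_rpow hτ.le,
    rpow_neg hτ.le, mul_comm (Gamma a)]

theorem integrableOn_rpow_neg_mul (hσ : IsStableSubordinatorDensity α σ) (hα : 0 < α) {a : ℝ}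
    (ha : 0 < a) (ht : 0 < t) : IntegrableOn (fun τ => τ ^ (-a) * σ t τ) (Ioi 0) := by
  refine (integrable_const_mul_iff (Gamma_pos_of_pos ha).ne'.isUnit _).1 <|
    (hσ.integrable_rpow_mul_exp_mul_prod hα ha ht).integral_prod_left.congr ?_
  filter_upwards [ae_restrict_mem measurableSet_Ioi] with τ hτ
  exact integral_rpow_mul_exp_mul_left σ t ha hτ

theorem integral_rpow_neg_mul (hσ : IsStableSubordinatorDensity α σ) (hα : 0 < α) {a : ℝ}
    (ha : 0 < a) (ht : 0 < t) :
    ∫ τ in Ioi 0, τ ^ (-a) * σ t τ =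
      2 / α * Gamma (2 * a / α) / Gamma a * (t ^ (1 / α)) ^ (-(2 * a)) := by
  have hswap : Gamma a * ∫ τ in Ioi 0, τ ^ (-a) * σ t τ =
      ∫ l in Ioi 0, l ^ (a - 1) * exp (-t * l ^ (α / 2)) :=
    calc Gamma a * ∫ τ in Ioi 0, τ ^ (-a) * σ t τ
        = ∫ τ in Ioi 0, ∫ l in Ioi 0, l ^ (a - 1) * (exp (-τ * l) * σ t τ) := by
          rw [← integral_const_mul]
          exact setIntegral_congr_fun measurableSet_Ioi fun τ hτ =>
            (integral_rpow_mul_exp_mul_left σ t ha hτ).symm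
      _ = ∫ l in Ioi 0, ∫ τ in Ioi 0, l ^ (a - 1) * (exp (-τ * l) * σ t τ) :=
          integral_integral_swap (hσ.integrable_rpow_mul_exp_mul_prod hα ha ht)
      _ = ∫ l in Ioi 0, l ^ (a - 1) * exp (-t * l ^ (α / 2)) :=
          setIntegral_congr_fun measurableSet_Ioi fun l (hl : 0 < l) => by
            rw [integral_const_mul, hσ.integral_exp_mul ht hl.le]
  rw [integral_rpow_mul_exp_neg_mul_rpow (half_pos hα) (by linarith) ht, mul_comm] at hswap
  rw [← rpow_mul ht.le, eq_div_of_mul_eq (Gamma_pos_of_pos ha).ne' hswap,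
    show -(a - 1 + 1) / (α / 2) = 1 / α * -(2 * a) by field_simp; ring,
    show (a - 1 + 1) / (α / 2) = 2 * a / α by field_simp; ring]
  field_simp

theorem integral_one_sub_exp_mul_le_window (hσ : IsStableSubordinatorDensity α σ) {ε M R : ℝ}
    (hε : 0 < ε) (hM : 0 < M) (hR : 0 < R) (ht : 0 < t) :
    ∫ τ in Ioi 0, (1 - exp (-τ * R⁻¹)) * σ t τ ≤
      (∫ τ in Icc (ε * R) (M * R), σ t τ) +
        2 * ε * (∫ τ in Ioi 0, (1 - exp (-τ * (ε * R)⁻¹)) * σ t τ) +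
        2 * ∫ τ in Ioi 0, (1 - exp (-τ * (M * R)⁻¹)) * σ t τ := by
  have hint {l : ℝ} (hl : 0 < l) := hσ.integrableOn_one_sub_exp_mul ht hl.le
  have hwindow : IntegrableOn ((Icc (ε * R) (M * R)).indicator (σ t)) (Ioi 0) :=
    (hσ.integrableOn ht).indicator measurableSet_Icc
  have hsubset : Icc (ε * R) (M * R) ⊆ Ioi 0 := fun τ hτ => (mul_pos hε hR).trans_le hτ.1
  have hε_int := (hint (inv_pos.2 (mul_pos hε hR))).const_mul (2 * ε)
  have hM_int := (hint (inv_pos.2 (mul_pos hM hR))).const_mul 2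
  have hsum_int : IntegrableOn (fun τ => (Icc (ε * R) (M * R)).indicator (σ t) τ +
      2 * ε * ((1 - exp (-τ * (ε * R)⁻¹)) * σ t τ)) (Ioi 0) := hwindow.add hε_int
  rw [← inter_eq_right.2 hsubset, ← setIntegral_indicator measurableSet_Icc,
    ← integral_const_mul, ← integral_const_mul, ← integral_add hwindow hε_int,
    ← integral_add hsum_int hM_int]
  refine setIntegral_mono_on (hint (inv_pos.2 hR)) (hsum_int.add hM_int) measurableSet_Ioi
    fun τ (hτ : 0 < τ) => ?_
  have hmem : (Icc (ε * R) (M * R)).indicator (σ t) τ =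
      (Icc ε M).indicator 1 (τ / R) * σ t τ := by
    simp only [indicator, mem_Icc, le_div_iff₀ hR, div_le_iff₀ hR, Pi.one_apply, ite_mul, one_mul,
      zero_mul]
  have hexp {b : ℝ} (hb : 0 < b) : -τ * (b * R)⁻¹ = -(τ / R / b) := by field_simp
  have hbound := one_sub_exp_neg_le_indicator_add hε hM (div_pos hτ hR).le
  rw [hmem, hexp hε, hexp hM, neg_mul, ← div_eq_mul_inv]
  exact (mul_le_mul_of_nonneg_right hbound (hσ.nonneg ht hτ)).trans_eq (by ring)

theorem mul_le_integral_window (hσ : IsStableSubordinatorDensity α σ) (hα : 0 < α) {ε M R : ℝ}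
    (hε : 0 < ε) (hM : 0 < M) (hR : 0 < R) (ht : 0 < t) (htR : t ≤ R ^ (α / 2)) :
    (1 / 2 - 2 * ε ^ (1 - α / 2) - 2 * M ^ (-(α / 2))) * (t * R ^ (-(α / 2))) ≤
      ∫ τ in Icc (ε * R) (M * R), σ t τ := by
  set y := t * R ^ (-(α / 2)) with hy_def
  have hy : 0 ≤ y := by positivity
  have hy1 : y ≤ 1 := by
    rw [hy_def, rpow_neg hR.le, ← div_eq_mul_inv]
    exact (div_le_one (by positivity)).2 htR
  have htail {b : ℝ} (hb : 0 < b) :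
      ∫ τ in Ioi 0, (1 - exp (-τ * (b * R)⁻¹)) * σ t τ ≤ b ^ (-(α / 2)) * y := by
    refine (hσ.integral_one_sub_exp_mul_le hα ht (by positivity)).trans_eq ?_
    rw [inv_rpow (by positivity), ← rpow_neg (by positivity), mul_rpow hb.le hR.le, mul_left_comm]
  have hmain : y / 2 ≤ ∫ τ in Ioi 0, (1 - exp (-τ * R⁻¹)) * σ t τ := by
    rw [hσ.integral_one_sub_exp_mul hα ht (by positivity), inv_rpow hR.le, ← rpow_neg hR.le]
    exact div_two_le_one_sub_exp_neg hy hy1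
  have hεpow : ε ^ (1 - α / 2) = ε * ε ^ (-(α / 2)) := by
    rw [sub_eq_add_neg, rpow_add hε, rpow_one]
  have hε_tail := mul_le_mul_of_nonneg_left (htail hε) (by positivity : 0 ≤ 2 * ε)
  have hbound := hσ.integral_one_sub_exp_mul_le_window hε hM hR ht
  rw [hεpow]
  linarith [htail hM]

end IsStableSubordinatorDensity

/-! ### Two-sided bounds for the subordinated kernel -/

section StableProfile

variable {ζ α t t' τ r s z b : ℝ}

/-- The parabolic distance `max (t^{1/α}, |r - s|)`, whose `α`-th power is the time scale on which
the `α`-stable process travels from `r` to `s`. -/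
noncomputable def stableScale (α t r s : ℝ) : ℝ :=
  max (t ^ (1 / α)) |r - s|

/-- The sharp size of `p_ζ^{(α)}(t,r,s)`, namely `t X^{-1-α} (X + r + s)^{-2ζ}` where `X` is
`stableScale α t r s`. -/
noncomputable def stableProfile (ζ α t r s : ℝ) : ℝ :=
  t * stableScale α t r s ^ (-(1 + α)) * (stableScale α t r s + r + s) ^ (-(2 * ζ))

theorem stableScale_pos (ht : 0 < t) : 0 < stableScale α t r s :=
  lt_max_of_lt_left (by positivity)

theorem stableScale_comm (α t r s : ℝ) : stableScale α t r s = stableScale α t s r := by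
  rw [stableScale, stableScale, abs_sub_comm]

theorem le_stableScale_rpow (hα : 0 < α) (ht : 0 < t) : t ≤ stableScale α t r s ^ α :=
  calc t = (t ^ (1 / α)) ^ α := by rw [one_div, rpow_inv_rpow ht.le hα.ne']
    _ ≤ stableScale α t r s ^ α := by
      gcongr
      exact le_max_left _ _

theorem mul_rpow_one_div_rpow_neg (hα : 0 < α) (ht : 0 < t) :
    t * (t ^ (1 / α)) ^ (-(1 + α)) = (t ^ (1 / α))⁻¹ := by
  have h : t = (t ^ (1 / α)) ^ α := by rw [one_div, rpow_inv_rpow ht.le hα.ne']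
  nth_rw 1 [h]
  rw [← rpow_add (by positivity), ← rpow_neg_one]
  ring_nf

theorem stableScale_add_le_max (hα : 0 < α) (ht : 0 < t) (hτ : 0 < τ) (r s z : ℝ) :
    stableScale α (t + τ) r s ≤
      max 2 (2 ^ (1 / α)) * max (stableScale α t r z) (stableScale α τ s z) := by
  set b : ℝ := max 2 (2 ^ (1 / α))
  set Y := max (stableScale α t r z) (stableScale α τ s z)
  have hY : 0 < Y := lt_max_of_lt_left (stableScale_pos ht)
  have htY : t ≤ Y ^ α :=
    (le_stableScale_rpow hα ht).trans
      (rpow_le_rpow (stableScale_pos ht).le (le_max_left _ _) hα.le)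
  have hτY : τ ≤ Y ^ α :=
    (le_stableScale_rpow hα hτ).trans
      (rpow_le_rpow (stableScale_pos hτ).le (le_max_right _ _) hα.le)
  have hrY : |r - z| ≤ Y := (le_max_right _ _).trans (le_max_left _ _)
  have hsY : |s - z| ≤ Y := (le_max_right _ _).trans (le_max_right _ _)
  refine max_le ?_ ?_
  · calc (t + τ) ^ (1 / α) ≤ (2 * Y ^ α) ^ (1 / α) := by
          gcongr
          linarith
      _ = 2 ^ (1 / α) * Y := by
          rw [mul_rpow zero_le_two (by positivity), one_div, rpow_rpow_inv hY.le hα.ne']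
      _ ≤ b * Y := by
          gcongr
          exact le_max_right _ _
  · calc |r - s| ≤ |r - z| + |z - s| := abs_sub_le r z s
      _ ≤ 2 * Y := by
          rw [abs_sub_comm z s]
          linarith
      _ ≤ b * Y := by
          gcongr
          exact le_max_left _ _

theorem stableProfile_le_mul (hζ : 0 ≤ ζ) (hα : 0 ≤ α) (hb : 1 ≤ b) (ht : 0 < t) (htt' : t ≤ t')
    (hr : 0 < r) (hs : 0 < s) (hz : 0 < z)
    (hscale : stableScale α t' r s ≤ b * stableScale α t r z) :
    stableProfile ζ α t r z ≤ b ^ (1 + α) * b ^ (2 * ζ) * stableProfile ζ α t' r s *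
      ((r + s + z) / (r + z)) ^ (2 * ζ) := by
  have ht' : 0 < t' := ht.trans_le htt'
  set q := (r + s + z) / (r + z)
  have hq : 1 ≤ q := (one_le_div (by positivity)).2 (by linarith)
  have hq_mul : q * (r + z) = r + s + z := div_mul_cancel₀ _ (by positivity)
  have hX : 0 < stableScale α t r z := stableScale_pos ht
  have hX' : 0 < stableScale α t' r s := stableScale_pos ht'
  unfold stableProfile
  set X := stableScale α t r z
  set X' := stableScale α t' r s
  have hsum : X' + r + s ≤ b * q * (X + r + z) :=
    calc X' + r + s ≤ b * X * q + b * (r + s + z) :=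
          add_assoc X' r s ▸ add_le_add (hscale.trans (le_mul_of_one_le_right (by positivity) hq))
            ((by linarith : r + s ≤ r + s + z).trans (le_mul_of_one_le_left (by positivity) hb))
      _ = b * q * (X + r + z) := by
          rw [← hq_mul]
          ring
  calc t * X ^ (-(1 + α)) * (X + r + z) ^ (-(2 * ζ))
      ≤ t' * (b ^ (1 + α) * X' ^ (-(1 + α))) *
        ((b * q) ^ (2 * ζ) * (X' + r + s) ^ (-(2 * ζ))) := by
        gcongr
        · exact rpow_neg_le_mul_rpow_neg hX hX' hscale (by positivity)
        · exact rpow_neg_le_mul_rpow_neg (by positivity) (by positivity) hsum (by positivity)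
    _ = _ := by
        rw [mul_rpow (by positivity) (by positivity)]
        ring

end StableProfile

section SubKernel

variable {ζ α : ℝ} {σ : ℝ → ℝ → ℝ} {t r s : ℝ}

theorem subKernel_comm (ζ : ℝ) (σ : ℝ → ℝ → ℝ) (t r s : ℝ) :
    subKernel ζ σ t r s = subKernel ζ σ t s r := by
  simp only [subKernel, besselHeat_comm ζ _ r s]

theorem subKernel_nonneg (hζ : -(1 / 2) < ζ) (hσ : IsStableSubordinatorDensity α σ) (ht : 0 < t)
    (hr : 0 < r) (hs : 0 < s) : 0 ≤ subKernel ζ σ t r s :=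
  setIntegral_nonneg measurableSet_Ioi fun _ hτ =>
    mul_nonneg (besselHeat_nonneg hζ hτ hr hs) (hσ.nonneg ht hτ)

theorem subKernel_le_integral (hζ : -(1 / 2) < ζ) (hσ : IsStableSubordinatorDensity α σ)
    (ht : 0 < t) (hr : 0 < r) (hs : 0 < s) {g : ℝ → ℝ}
    (hg : IntegrableOn (fun τ => g τ * σ t τ) (Ioi 0))
    (h : ∀ τ, 0 < τ → besselHeat ζ τ r s ≤ g τ) :
    subKernel ζ σ t r s ≤ ∫ τ in Ioi 0, g τ * σ t τ := by
  refine integral_mono_of_nonneg ?_ hg ?_ <;>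
    filter_upwards [ae_restrict_mem measurableSet_Ioi] with τ hτ
  · exact mul_nonneg (besselHeat_nonneg hζ hτ hr hs) (hσ.nonneg ht hτ)
  · exact mul_le_mul_of_nonneg_right (h τ hτ) (hσ.nonneg ht hτ)

theorem integrableOn_besselHeat_mul (hζ : 0 ≤ ζ) (hα : 0 < α)
    (hσ : IsStableSubordinatorDensity α σ) (ht : 0 < t) (hr : 0 < r) (hs : 0 < s) :
    IntegrableOn (fun τ => besselHeat ζ τ r s * σ t τ) (Ioi 0) := by
  obtain ⟨_, _, C, hC, hheat⟩ := exists_besselHeat_bounds hζ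
  refine ((hσ.integrableOn_rpow_neg_mul hα one_half_pos ht).const_mul
    (C * (r * s) ^ (-ζ))).mono'
    ((measurable_besselHeat ζ r s).mul (hσ.measurable ht)).aestronglyMeasurable ?_
  filter_upwards [ae_restrict_mem measurableSet_Ioi] with τ hτ
  have hσ0 := hσ.nonneg ht hτ
  rw [norm_of_nonneg (mul_nonneg (besselHeat_nonneg (by linarith) hτ hr hs) hσ0), ← mul_assoc,
    mul_assoc C]
  gcongr
  exact (hheat τ r s hτ hr hs).2.trans (by gcongr; exact gaussProfile_le_rpow hζ hτ hr hs)

theorem exists_subKernel_le_onDiag (hζ : 0 ≤ ζ) (hα : 0 < α)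
    (hσ : IsStableSubordinatorDensity α σ) :
    ∃ C > 0, ∀ t r s, 0 < t → 0 < r → 0 < s → subKernel ζ σ t r s ≤
      C * ((t ^ (1 / α))⁻¹ * (t ^ (1 / α) + r + s) ^ (-(2 * ζ))) := by
  obtain ⟨_, _, C₁, hC₁, hheat⟩ := exists_besselHeat_bounds hζ
  obtain ⟨C₂, hC₂, hgauss⟩ := exists_gaussProfile_le_rpow_add_rpow hζ
  set m : ℝ → ℝ := fun a => 2 / α * Gamma (2 * a / α) / Gamma a
  have hm {a : ℝ} (ha : 0 < a) : 0 < m a :=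
    div_pos (mul_pos (by positivity) (Gamma_pos_of_pos (by positivity))) (Gamma_pos_of_pos ha)
  have ha₁ : (0 : ℝ) < 1 / 2 := one_half_pos
  have ha₂ : 0 < 1 / 2 + ζ := by positivity
  refine ⟨C₁ * C₂ * (m (1 / 2) + m (1 / 2 + ζ)),
    mul_pos (mul_pos hC₁ hC₂) (add_pos (hm ha₁) (hm ha₂)), fun t r s ht hr hs => ?_⟩
  set T := t ^ (1 / α)
  have hT : 0 < T := by positivity
  set K := C₁ * C₂ * (T + r + s) ^ (-(2 * ζ))
  have hint₁ := hσ.integrableOn_rpow_neg_mul hα ha₁ ht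
  have hint₂ := (hσ.integrableOn_rpow_neg_mul hα ha₂ ht).const_mul (T ^ (2 * ζ))
  have hmoments (τ : ℝ) : K * (τ ^ (-(1 / 2) : ℝ) + T ^ (2 * ζ) * τ ^ (-(1 / 2 + ζ))) * σ t τ =
      K * (τ ^ (-(1 / 2) : ℝ) * σ t τ + T ^ (2 * ζ) * (τ ^ (-(1 / 2 + ζ)) * σ t τ)) := by ring
  have hpow₁ : T ^ (-(2 * (1 / 2)) : ℝ) = T⁻¹ := by norm_num [rpow_neg_one]
  have hpow₂ : T ^ (2 * ζ) * T ^ (-(2 * (1 / 2 + ζ))) = T⁻¹ := by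
    rw [← rpow_add hT, ← rpow_neg_one]
    ring_nf
  refine (subKernel_le_integral (by linarith) hσ ht hr hs
    (g := fun τ => K * (τ ^ (-(1 / 2) : ℝ) + T ^ (2 * ζ) * τ ^ (-(1 / 2 + ζ)))) ?_
    fun τ hτ => ?_).trans_eq ?_
  · simp only [hmoments]
    exact (hint₁.add hint₂).const_mul K
  · calc besselHeat ζ τ r s ≤ C₁ * (C₂ * (T + r + s) ^ (-(2 * ζ)) *
          (τ ^ (-(1 / 2) : ℝ) + T ^ (2 * ζ) * τ ^ (-(1 / 2 + ζ)))) :=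
        (hheat τ r s hτ hr hs).2.trans (by gcongr; exact hgauss T τ r s hT hτ hr hs)
      _ = _ := by ring
  · simp only [hmoments]
    rw [integral_const_mul, integral_add hint₁ hint₂, integral_const_mul,
      hσ.integral_rpow_neg_mul hα ha₁ ht, hσ.integral_rpow_neg_mul hα ha₂ ht, mul_left_comm,
      hpow₁, hpow₂]
    ring

theorem exists_subKernel_le_offDiag (hζ : 0 ≤ ζ) (hα : 0 < α)
    (hσ : IsStableSubordinatorDensity α σ) :
    ∃ C > 0, ∀ t r s, 0 < t → 0 < r → 0 < s → r ≠ s → subKernel ζ σ t r s ≤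
      C * (t * |r - s| ^ (-(1 + α)) * (r + s) ^ (-(2 * ζ))) := by
  obtain ⟨_, _, C₁, hC₁, hheat⟩ := exists_besselHeat_bounds hζ
  obtain ⟨C₂, hC₂, hgauss⟩ := exists_gaussProfile_le_one_sub_exp hζ
  refine ⟨C₁ * C₂, by positivity, fun t r s ht hr hs hne => ?_⟩
  have hd : 0 < |r - s| := abs_pos.2 (sub_ne_zero.2 hne)
  have hlaplace : (0 : ℝ) ≤ (|r - s| ^ 2)⁻¹ := by positivity
  set K := C₁ * C₂ * (|r - s|⁻¹ * (r + s) ^ (-(2 * ζ)))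
  have hpow : |r - s|⁻¹ * ((|r - s| ^ 2)⁻¹) ^ (α / 2) = |r - s| ^ (-(1 + α)) := by
    rw [inv_rpow (by positivity), ← rpow_neg (by positivity), sq_rpow_neg hd.le, ← rpow_neg_one,
      ← rpow_add hd]
    ring_nf
  calc subKernel ζ σ t r s
      ≤ ∫ τ in Ioi 0, K * (1 - exp (-τ * (|r - s| ^ 2)⁻¹)) * σ t τ := by
        refine subKernel_le_integral (by linarith) hσ ht hr hs ?_ fun τ hτ => ?_
        · simp only [mul_assoc K]
          exact (hσ.integrableOn_one_sub_exp_mul ht hlaplace).const_mul K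
        · refine ((hheat τ r s hτ hr hs).2.trans
            (mul_le_mul_of_nonneg_left (hgauss τ r s hτ hr hs hne) hC₁.le)).trans_eq ?_
          ring
    _ ≤ K * (t * ((|r - s| ^ 2)⁻¹) ^ (α / 2)) := by
        simp only [mul_assoc K]
        rw [integral_const_mul]
        gcongr
        exact hσ.integral_one_sub_exp_mul_le hα ht hlaplace
    _ = _ := by
        rw [← hpow]
        ring

theorem exists_subKernel_le_stableProfile (hζ : 0 ≤ ζ) (hα : 0 < α)
    (hσ : IsStableSubordinatorDensity α σ) :
    ∃ C > 0, ∀ t r s, 0 < t → 0 < r → 0 < s →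
      subKernel ζ σ t r s ≤ C * stableProfile ζ α t r s := by
  obtain ⟨C₁, hC₁, honDiag⟩ := exists_subKernel_le_onDiag hζ hα hσ
  obtain ⟨C₂, hC₂, hoffDiag⟩ := exists_subKernel_le_offDiag hζ hα hσ
  refine ⟨max C₁ (C₂ * 2 ^ (2 * ζ)), by positivity, fun t r s ht hr hs => ?_⟩
  rcases le_total |r - s| (t ^ (1 / α)) with hle | hle
  · rw [stableProfile, stableScale, max_eq_left hle, mul_rpow_one_div_rpow_neg hα ht]
    refine (honDiag t r s ht hr hs).trans ?_
    gcongr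
    exact le_max_left _ _
  · have hd : 0 < |r - s| := lt_of_lt_of_le (by positivity) hle
    have hd_le : |r - s| ≤ r + s := abs_sub_le_iff.2 ⟨by linarith, by linarith⟩
    have hsum : |r - s| + r + s ≤ 2 * (r + s) := by linarith
    rw [stableProfile, stableScale, max_eq_right hle]
    calc subKernel ζ σ t r s ≤ C₂ * (t * |r - s| ^ (-(1 + α)) * (r + s) ^ (-(2 * ζ))) :=
          hoffDiag t r s ht hr hs (sub_ne_zero.1 (abs_pos.1 hd))
      _ ≤ C₂ * (t * |r - s| ^ (-(1 + α)) *
          (2 ^ (2 * ζ) * (|r - s| + r + s) ^ (-(2 * ζ)))) := by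
        gcongr
        exact rpow_neg_le_mul_rpow_neg (by positivity) (by positivity) hsum (by positivity)
      _ = C₂ * 2 ^ (2 * ζ) * (t * |r - s| ^ (-(1 + α)) * (|r - s| + r + s) ^ (-(2 * ζ))) := by
        ring
      _ ≤ _ := by
        gcongr
        exact le_max_right _ _

theorem exists_mul_le_integral_window (hα0 : 0 < α) (hα2 : α < 2)
    (hσ : IsStableSubordinatorDensity α σ) :
    ∃ ε > 0, ∃ M ≥ 1, ∀ t R, 0 < t → 0 < R → t ≤ R ^ (α / 2) →
      1 / 4 * (t * R ^ (-(α / 2))) ≤ ∫ τ in Icc (ε * R) (M * R), σ t τ := by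
  set ε : ℝ := (1 / 16) ^ (1 - α / 2)⁻¹
  set M : ℝ := 16 ^ (α / 2)⁻¹ with hM_def
  have hε : 0 < ε := by positivity
  have hM : 0 < M := by positivity
  have hεpow : ε ^ (1 - α / 2) = 1 / 16 := rpow_inv_rpow (by norm_num) (by linarith)
  have hMpow : M ^ (-(α / 2)) = 1 / 16 := by
    rw [rpow_neg hM.le, hM_def, rpow_inv_rpow (by norm_num) (by positivity), one_div]
  refine ⟨ε, hε, M, one_le_rpow (by norm_num) (by positivity), fun t R ht hR htR => ?_⟩
  have h := hσ.mul_le_integral_window hα0 hε hM hR ht htR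
  rw [hεpow, hMpow] at h
  norm_num at h ⊢
  exact h

theorem exists_stableProfile_le_subKernel (hζ : 0 ≤ ζ) (hα0 : 0 < α) (hα2 : α < 2)
    (hσ : IsStableSubordinatorDensity α σ) :
    ∃ c > 0, ∀ t r s, 0 < t → 0 < r → 0 < s →
      c * stableProfile ζ α t r s ≤ subKernel ζ σ t r s := by
  obtain ⟨c, hc, _, _, hheat⟩ := exists_besselHeat_bounds hζ
  obtain ⟨ε, hε, M, hM, hmass⟩ := exists_mul_le_integral_window hα0 hα2 hσ
  have : 0 < M := one_pos.trans_le hM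
  set A := M ^ (-(1 / 2) : ℝ) * (2 * M) ^ (-ζ) * exp (-(1 / (4 * ε)))
  refine ⟨c * A * (1 / 4), by positivity, fun t r s ht hr hs => ?_⟩
  have hX : 0 < stableScale α t r s := stableScale_pos ht
  have htX : t ≤ stableScale α t r s ^ α := le_stableScale_rpow hα0 ht
  have hd : |r - s| ≤ stableScale α t r s := le_max_right _ _
  unfold stableProfile
  set X := stableScale α t r s
  set K := c * (A * (X⁻¹ * (X + r + s) ^ (-(2 * ζ))))
  have hXpow : (X ^ 2) ^ (α / 2) = X ^ α := by
    rw [← rpow_two, ← rpow_mul hX.le, mul_div_cancel₀ α two_ne_zero]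
  have hsubset : Icc (ε * X ^ 2) (M * X ^ 2) ⊆ Ioi 0 := fun τ hτ =>
    lt_of_lt_of_le (by positivity) hτ.1
  have hint := integrableOn_besselHeat_mul hζ hα0 hσ ht hr hs
  calc c * A * (1 / 4) * (t * X ^ (-(1 + α)) * (X + r + s) ^ (-(2 * ζ)))
      = K * (1 / 4 * (t * (X ^ 2) ^ (-(α / 2)))) := by
        rw [sq_rpow_neg hX.le, mul_div_cancel₀ α two_ne_zero, neg_add, rpow_add hX, rpow_neg_one]
        ring
    _ ≤ K * ∫ τ in Icc (ε * X ^ 2) (M * X ^ 2), σ t τ := by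
        gcongr
        exact hmass t (X ^ 2) ht (by positivity) (hXpow ▸ htX)
    _ ≤ ∫ τ in Icc (ε * X ^ 2) (M * X ^ 2), besselHeat ζ τ r s * σ t τ := by
        rw [← integral_const_mul]
        refine setIntegral_mono_on (((hσ.integrableOn ht).mono_set hsubset).const_mul K)
          (hint.mono_set hsubset) measurableSet_Icc fun τ hτ => ?_
        refine mul_le_mul_of_nonneg_right ?_ (hσ.nonneg ht (hsubset hτ))
        exact (mul_le_mul_of_nonneg_left (le_gaussProfile hζ hε hM hX hτ hr hs hd) hc.le).trans
          (hheat τ r s (hsubset hτ) hr hs).1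
    _ ≤ subKernel ζ σ t r s := by
        refine setIntegral_mono_set hint ?_ hsubset.eventuallyLE
        filter_upwards [ae_restrict_mem measurableSet_Ioi] with τ hτ
        exact mul_nonneg (besselHeat_nonneg (by linarith) hτ hr hs) (hσ.nonneg ht hτ)

theorem exists_subKernel_le_of_stableScale_le (hζ : 0 ≤ ζ) (hα0 : 0 < α) (hα2 : α < 2)
    (hσ : IsStableSubordinatorDensity α σ) {b : ℝ} (hb : 1 ≤ b) :
    ∃ C > 0, ∀ t t' r s z, 0 < t → t ≤ t' → 0 < r → 0 < s → 0 < z →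
      stableScale α t' r s ≤ b * stableScale α t r z →
      subKernel ζ σ t r z ≤
        C * subKernel ζ σ t' r s * ((r + s + z) / (r + z)) ^ (2 * ζ) := by
  obtain ⟨C, hC, hupper⟩ := exists_subKernel_le_stableProfile hζ hα0 hσ
  obtain ⟨c, hc, hlower⟩ := exists_stableProfile_le_subKernel hζ hα0 hα2 hσ
  set B := b ^ (1 + α) * b ^ (2 * ζ)
  have hB : 0 < B := by positivity
  refine ⟨C * B / c, by positivity, fun t t' r s z ht htt' hr hs hz hscale => ?_⟩
  set w := ((r + s + z) / (r + z)) ^ (2 * ζ)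
  calc subKernel ζ σ t r z ≤ C * stableProfile ζ α t r z := hupper t r z ht hr hz
    _ ≤ C * (B * stableProfile ζ α t' r s * w) := by
        gcongr
        exact stableProfile_le_mul hζ hα0.le hb ht htt' hr hs hz hscale
    _ = C * B / c * (c * stableProfile ζ α t' r s) * w := by field_simp
    _ ≤ C * B / c * subKernel ζ σ t' r s * w := by
        gcongr
        exact hlower t' r s (ht.trans_le htt') hr hs

end SubKernel

theorem stmt12 (ζ α : ℝ) (hζ : 0 ≤ ζ) (hα0 : 0 < α) (hα2 : α < 2)
    (σ : ℝ → ℝ → ℝ) (hσ : IsStableSubordinatorDensity α σ) :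
    ∃ C : ℝ, 0 < C ∧
      ∀ r s z t τ : ℝ, 0 < r → 0 < s → 0 < z → 0 < t → 0 < τ →
        subKernel ζ σ t r z * subKernel ζ σ τ z s
          ≤ C * subKernel ζ σ (t + τ) r s *
            (((r + s + z) / (s + z)) ^ (2 * ζ) * subKernel ζ σ t r z
              + ((r + s + z) / (r + z)) ^ (2 * ζ) * subKernel ζ σ τ z s) := by
  set b : ℝ := max 2 (2 ^ (1 / α))
  obtain ⟨C, hC, hbound⟩ := exists_subKernel_le_of_stableScale_le hζ hα0 hα2 hσ
    (b := b) (one_le_two.trans (le_max_left _ _))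
  refine ⟨C, hC, fun r s z t τ hr hs hz ht hτ => ?_⟩
  have hnonneg {t r s : ℝ} (ht : 0 < t) (hr : 0 < r) (hs : 0 < s) :=
    subKernel_nonneg (by linarith : -(1 / 2) < ζ) hσ ht hr hs
  have hA := hnonneg ht hr hz
  have hB := hnonneg hτ hz hs
  have hD := hnonneg (add_pos ht hτ) hr hs
  have hscale := stableScale_add_le_max hα0 ht hτ r s z
  rw [mul_add]
  rcases le_total (stableScale α τ s z) (stableScale α t r z) with hle | hle
  · rw [max_eq_left hle] at hscale
    refine le_add_of_nonneg_of_le (by positivity) ?_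
    rw [← mul_assoc]
    gcongr
    exact hbound t (t + τ) r s z ht (by linarith) hr hs hz hscale
  · rw [max_eq_right hle, stableScale_comm] at hscale
    refine le_add_of_le_of_nonneg ?_ (by positivity)
    rw [← mul_assoc, mul_comm, subKernel_comm ζ σ τ, subKernel_comm ζ σ (t + τ), add_comm r s]
    gcongr
    exact hbound τ (t + τ) s r z hτ (by linarith) hs hr hz hscale
end

section
/- Let ζ ∈ (-1/2, ∞) and 0 < C₀ ≤ 1. Then there exist constants c₁, c₂ > 0 and K₁, K₂ > 0 (all depending only on ζ and C₀) such that for all τ ∈ [C₀, 1/C₀] and all z, s > 0: K₁ · p_ζ^{(2)}(1, c₁ z, c₁ s) ≤ p_ζ^{(2)}(τ,z,s) ≤ K₂ · p_ζ^{(2)}(1, c₂ z, c₂ s). -/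
open MeasureTheory Real Set Filter

/-!
Up to a constant that is uniform for times in a compact subset of `(0, ∞)`, the kernel increases
with time: `p(t, r, s) ≤ (t' / t) ^ (ζ + 5 / 2) * p(t', r, s)` for `t ≤ t'`. Comparing `τ` with the
endpoints `C₀` and `1 / C₀` and rescaling to time `1` by `r ↦ r / √t` gives both bounds.

With `ν = ζ - 1 / 2`, the time comparison says that `x ^ (-(ν + 2)) * exp (-x) * I_ν(x)` decreases:
the growth `exp x` of `I_ν` is absorbed by completing `r ^ 2 + s ^ 2` to `(r - s) ^ 2`. As
`I_ν' = (ν / x) I_ν + I_{ν+1}`, the monotonicity amounts to `I_{ν+1} ≤ (1 + 2 / x) I_ν`. This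
follows from `I_{ν+1} ^ 2 ≤ I_ν (I_ν - (2 ν / x) I_{ν+1})` and `-1 < ν`, and the latter inequality
is `(∑ k p_k) ^ 2 ≤ (∑ p_k) (∑ k ^ 2 p_k)` for the terms `p_k` of the series of `I_ν`.
-/

lemma hasDerivAt_tsum_mul_pow {a : ℕ → ℝ} {r w : ℝ} (hwr : |w| < r)
    (ha : Summable fun k ↦ a k * w ^ k)
    (ha' : Summable fun k : ℕ ↦ (k : ℝ) * a k * r ^ (k - 1)) :
    HasDerivAt (fun y ↦ ∑' k, a k * y ^ k) (∑' k : ℕ, (k : ℝ) * a k * w ^ (k - 1)) w := by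
  have hw : w ∈ Metric.ball (0 : ℝ) r := by simpa using hwr
  refine hasDerivAt_tsum_of_isPreconnected (g := fun k y ↦ a k * y ^ k)
    (g' := fun k y ↦ (k : ℝ) * a k * y ^ (k - 1)) ha'.norm Metric.isOpen_ball
    (convex_ball 0 r).isPreconnected (fun k y _ ↦ ?_) (fun k y hy ↦ ?_) hw ha hw
  · exact ((hasDerivAt_pow k y).const_mul (a k)).congr_deriv (by ring)
  · have hyr : |y| ≤ |r| := (mem_ball_zero_iff.1 hy).le.trans (le_abs_self r)
    simp only [norm_mul, norm_pow, Real.norm_eq_abs]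
    gcongr

lemma sq_le_mul_of_hasSum {ι : Type*} {p x : ι → ℝ} {m₀ m₁ m₂ : ℝ} (hp : ∀ i, 0 ≤ p i)
    (h₀ : HasSum p m₀) (h₁ : HasSum (fun i ↦ p i * x i) m₁)
    (h₂ : HasSum (fun i ↦ p i * x i ^ 2) m₂) : m₁ ^ 2 ≤ m₀ * m₂ := by
  have hquad (t : ℝ) : 0 ≤ m₀ * (t * t) + 2 * m₁ * t + m₂ := by
    refine (((h₀.mul_right (t * t)).add (h₁.mul_right (2 * t))).add h₂).nonneg (fun i ↦ ?_)
      |>.trans_eq (by ring)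
    exact (mul_nonneg (hp i) (sq_nonneg (t + x i))).trans_eq (by ring)
  have hdiscrim := discrim_le_zero hquad
  rw [discrim] at hdiscrim
  linarith

/-- The Taylor coefficients of the Bessel–Clifford function. The junk values of `Γ` at its poles and
of division by `0` make them those defined by the entire function `1 / Γ`, for every real `ν`. -/
noncomputable def besselCliffordCoeff (ν : ℝ) (k : ℕ) : ℝ :=
  1 / ((Nat.factorial k : ℝ) * Real.Gamma ((k : ℝ) + ν + 1))

/-- The Bessel–Clifford function, the real form of `Complex.regularizedHGFun 0 {ν + 1}`: the entire
factor in `I_ν(x) = (x / 2) ^ ν * besselClifford ν (x ^ 2 / 4)`, through which `I_ν` is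
differentiated. -/
noncomputable def besselClifford (ν w : ℝ) : ℝ :=
  ∑' k : ℕ, besselCliffordCoeff ν k * w ^ k

lemma besselCliffordCoeff_pos {ν : ℝ} (hν : -1 < ν) (k : ℕ) : 0 < besselCliffordCoeff ν k := by
  have hΓ : 0 < Real.Gamma ((k : ℝ) + ν + 1) :=
    Real.Gamma_pos_of_pos (by linarith [k.cast_nonneg (α := ℝ)])
  rw [besselCliffordCoeff]
  positivity

lemma succ_mul_besselCliffordCoeff_succ (ν : ℝ) (k : ℕ) :
    ((k : ℝ) + 1) * besselCliffordCoeff ν (k + 1) = besselCliffordCoeff (ν + 1) k := by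
  rw [besselCliffordCoeff, besselCliffordCoeff, Nat.factorial_succ, mul_one_div]
  push_cast
  rw [mul_assoc, div_mul_cancel_left₀ (by positivity), one_div, add_right_comm (k : ℝ) 1 ν,
    add_assoc (k : ℝ) ν 1]

lemma add_mul_besselCliffordCoeff_add_one (ν : ℝ) (k : ℕ) :
    ((k : ℝ) + ν + 1) * besselCliffordCoeff (ν + 1) k = besselCliffordCoeff ν k := by
  rw [besselCliffordCoeff, besselCliffordCoeff, ← add_assoc]
  rcases eq_or_ne ((k : ℝ) + ν + 1) 0 with h | h
  · simp [h]
  · rw [Real.Gamma_add_one h]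
    field_simp

lemma ofReal_besselCliffordCoeff (ν : ℝ) (k : ℕ) :
    (besselCliffordCoeff ν k : ℂ) = Complex.regularizedHGFunCoeff 0 {(ν : ℂ) + 1} k := by
  simp [besselCliffordCoeff, Complex.regularizedHGFunCoeff, ← Complex.Gamma_ofReal,
    add_right_comm, add_comm (k : ℂ)]

lemma summable_besselClifford (ν w : ℝ) : Summable fun k ↦ besselCliffordCoeff ν k * w ^ k := by
  have hradius : (‖w‖₊ : ENNReal) <
      (Complex.regularizedHGFunSeries 0 {(ν : ℂ) + 1}).radius := by
    rw [Complex.radius_regularizedHGFunSeries_eq_top (by simp)]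
    exact ENNReal.coe_lt_top
  refine .of_norm ((FormalMultilinearSeries.summable_norm_mul_pow _ hradius).congr fun k ↦ ?_)
  rw [FormalMultilinearSeries.norm_apply_eq_norm_coef, Complex.regularizedHGFunSeries_coeff,
    ← ofReal_besselCliffordCoeff, Complex.norm_real, norm_mul, norm_pow, coe_nnnorm]

lemma hasSum_besselClifford (ν w : ℝ) :
    HasSum (fun k ↦ besselCliffordCoeff ν k * w ^ k) (besselClifford ν w) :=
  (summable_besselClifford ν w).hasSum

lemma besselClifford_pos {ν w : ℝ} (hν : -1 < ν) (hw : 0 ≤ w) : 0 < besselClifford ν w :=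
  (summable_besselClifford ν w).tsum_pos
    (fun k ↦ mul_nonneg (besselCliffordCoeff_pos hν k).le (pow_nonneg hw k)) 0
    (by simpa using besselCliffordCoeff_pos hν 0)

lemma hasSum_natCast_mul_besselCliffordCoeff_mul_pow_pred (ν w : ℝ) :
    HasSum (fun k : ℕ ↦ (k : ℝ) * besselCliffordCoeff ν k * w ^ (k - 1))
      (besselClifford (ν + 1) w) := by
  rw [← hasSum_nat_add_iff' 1]
  simpa [succ_mul_besselCliffordCoeff_succ] using hasSum_besselClifford (ν + 1) w

lemma hasDerivAt_besselClifford (ν w : ℝ) :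
    HasDerivAt (besselClifford ν) (besselClifford (ν + 1) w) w := by
  rw [← (hasSum_natCast_mul_besselCliffordCoeff_mul_pow_pred ν w).tsum_eq]
  exact hasDerivAt_tsum_mul_pow (lt_add_one |w|) (summable_besselClifford ν w)
    (hasSum_natCast_mul_besselCliffordCoeff_mul_pow_pred ν (|w| + 1)).summable

lemma hasSum_natCast_mul_besselClifford (ν w : ℝ) :
    HasSum (fun k : ℕ ↦ (besselCliffordCoeff ν k * w ^ k) * k)
      (w * besselClifford (ν + 1) w) := by
  rw [← hasSum_nat_add_iff' 1]
  simp only [Finset.range_one, Finset.sum_singleton, Nat.cast_zero, mul_zero, sub_zero]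
  refine ((hasSum_besselClifford (ν + 1) w).mul_left w).congr_fun fun k ↦ ?_
  rw [← succ_mul_besselCliffordCoeff_succ ν k]
  push_cast
  ring

/-- This is Bessel's equation: `w ^ k` is an eigenvector of `θ (θ + ν)`, where `θ = w d/dw`, with
eigenvalue `k (k + ν)`. -/
lemma hasSum_natCast_mul_add_besselClifford (ν w : ℝ) :
    HasSum (fun k : ℕ ↦ (besselCliffordCoeff ν k * w ^ k) * (k * (k + ν)))
      (w * besselClifford ν w) := by
  rw [← hasSum_nat_add_iff' 1]
  simp only [Finset.range_one, Finset.sum_singleton, Nat.cast_zero, zero_mul, mul_zero, sub_zero]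
  refine ((hasSum_besselClifford ν w).mul_left w).congr_fun fun k ↦ ?_
  rw [← add_mul_besselCliffordCoeff_add_one ν k, ← succ_mul_besselCliffordCoeff_succ ν k]
  push_cast
  ring

lemma mul_besselClifford_add_one_sq_le {ν w : ℝ} (hν : -1 < ν) (hw : 0 < w) :
    w * besselClifford (ν + 1) w ^ 2 ≤
      besselClifford ν w * (besselClifford ν w - ν * besselClifford (ν + 1) w) := by
  have hmean := hasSum_natCast_mul_besselClifford ν w
  have hsecond : HasSum (fun k : ℕ ↦ (besselCliffordCoeff ν k * w ^ k) * (k : ℝ) ^ 2)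
      (w * besselClifford ν w - w * besselClifford (ν + 1) w * ν) :=
    ((hasSum_natCast_mul_add_besselClifford ν w).sub (hmean.mul_right ν)).congr_fun
      fun k ↦ by ring
  have hcauchy := sq_le_mul_of_hasSum
    (fun k ↦ mul_nonneg (besselCliffordCoeff_pos hν k).le (pow_nonneg hw.le k))
    (hasSum_besselClifford ν w) hmean hsecond
  refine le_of_mul_le_mul_left ?_ hw
  linarith

lemma besselI_eq_rpow_mul_besselClifford (ν : ℝ) {x : ℝ} (hx : 0 < x) :
    besselI ν x = (x / 2) ^ ν * besselClifford ν (x ^ 2 / 4) := by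
  rw [besselI, besselClifford, ← tsum_mul_left]
  refine tsum_congr fun k ↦ ?_
  have hpow : (x / 2) ^ (2 * (k : ℝ) + ν) = (x / 2) ^ ν * (x ^ 2 / 4) ^ k := by
    rw [Real.rpow_add (by positivity), Real.rpow_mul (by positivity), Real.rpow_natCast,
      Real.rpow_two, mul_comm, div_pow]
    norm_num
  rw [hpow, besselCliffordCoeff]
  ring

lemma besselI_add_one_eq_rpow_mul_besselClifford (ν : ℝ) {x : ℝ} (hx : 0 < x) :
    besselI (ν + 1) x = (x / 2) ^ ν * (x / 2 * besselClifford (ν + 1) (x ^ 2 / 4)) := by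
  rw [besselI_eq_rpow_mul_besselClifford _ hx, Real.rpow_add_one (by positivity), mul_assoc]

lemma besselI_pos {ν x : ℝ} (hν : -1 < ν) (hx : 0 < x) : 0 < besselI ν x := by
  rw [besselI_eq_rpow_mul_besselClifford ν hx]
  exact mul_pos (by positivity) (besselClifford_pos hν (by positivity))

lemma hasDerivAt_besselI (ν : ℝ) {x : ℝ} (hx : 0 < x) :
    HasDerivAt (besselI ν) (ν / x * besselI ν x + besselI (ν + 1) x) x := by
  have hpow : HasDerivAt (fun y : ℝ ↦ (y / 2) ^ ν) (1 / 2 * ν * (x / 2) ^ (ν - 1)) x :=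
    ((hasDerivAt_id x).div_const 2).rpow_const (Or.inl (by simpa using hx.ne'))
  have hentire := (hasDerivAt_besselClifford ν (x ^ 2 / 4)).comp x
    ((hasDerivAt_pow 2 x).div_const 4)
  refine ((hpow.mul hentire).congr_of_eventuallyEq ?_).congr_deriv ?_
  · filter_upwards [Ioi_mem_nhds hx] with y hy
    exact besselI_eq_rpow_mul_besselClifford ν hy
  · rw [besselI_add_one_eq_rpow_mul_besselClifford ν hx, besselI_eq_rpow_mul_besselClifford ν hx,
      Real.rpow_sub_one (by positivity)]
    simp only [Function.comp_apply]
    field_simp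
    ring

lemma besselI_add_one_sq_le {ν x : ℝ} (hν : -1 < ν) (hx : 0 < x) :
    besselI (ν + 1) x ^ 2 ≤ besselI ν x * (besselI ν x - 2 * ν / x * besselI (ν + 1) x) := by
  rw [besselI_add_one_eq_rpow_mul_besselClifford ν hx, besselI_eq_rpow_mul_besselClifford ν hx]
  have hw : 0 < x ^ 2 / 4 := by positivity
  set w := x ^ 2 / 4 with hw_def
  calc ((x / 2) ^ ν * (x / 2 * besselClifford (ν + 1) w)) ^ 2
      = ((x / 2) ^ ν) ^ 2 * (w * besselClifford (ν + 1) w ^ 2) := by rw [hw_def]; ring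
    _ ≤ ((x / 2) ^ ν) ^ 2 *
          (besselClifford ν w * (besselClifford ν w - ν * besselClifford (ν + 1) w)) :=
        mul_le_mul_of_nonneg_left (mul_besselClifford_add_one_sq_le hν hw) (sq_nonneg _)
    _ = _ := by field_simp

lemma besselI_add_one_le {ν x : ℝ} (hν : -1 < ν) (hx : 0 < x) :
    besselI (ν + 1) x ≤ (1 + 2 / x) * besselI ν x := by
  have hsq := besselI_add_one_sq_le hν hx
  have hpos := besselI_pos hν hx
  have hpos' : 0 < besselI (ν + 1) x := besselI_pos (by linarith) hx
  set a := besselI ν x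
  set b := besselI (ν + 1) x
  by_contra! hlt
  have hab : a < b - 2 / x * a := by linarith
  have hlt' : a < b := by linarith [show 0 < 2 / x * a by positivity]
  refine hsq.not_gt ?_
  calc a * (a - 2 * ν / x * b)
      ≤ a * (a - 2 * (-1) / x * b) := by gcongr
    _ = a * a + b * (2 / x * a) := by ring
    _ < b * a + b * (2 / x * a) := by gcongr
    _ < b ^ 2 := by linarith [mul_lt_mul_of_pos_left hab hpos']

lemma antitoneOn_rpow_mul_exp_neg_mul_besselI {ν : ℝ} (hν : -1 < ν) :
    AntitoneOn (fun x ↦ x ^ (-(ν + 2)) * Real.exp (-x) * besselI ν x) (Ioi 0) := by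
  have hderiv (x : ℝ) (hx : 0 < x) :
      HasDerivAt (fun x ↦ x ^ (-(ν + 2)) * Real.exp (-x) * besselI ν x)
        (x ^ (-(ν + 2)) * Real.exp (-x) * (besselI (ν + 1) x - (1 + 2 / x) * besselI ν x)) x := by
    refine (((Real.hasDerivAt_rpow_const (Or.inl hx.ne')).mul (hasDerivAt_neg x).exp).mul
      (hasDerivAt_besselI ν hx)).congr_deriv ?_
    rw [Real.rpow_sub_one hx.ne']
    simp only [Pi.mul_apply]
    field_simp
    ring
  refine antitoneOn_of_hasDerivWithinAt_nonpos (convex_Ioi 0)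
    (fun x hx ↦ (hderiv x hx).continuousAt.continuousWithinAt)
    (fun x hx ↦ (hderiv x (interior_subset hx)).hasDerivWithinAt) fun x hx ↦ ?_
  have hx : 0 < x := interior_subset hx
  exact mul_nonpos_of_nonneg_of_nonpos (by positivity)
    (sub_nonpos.2 (besselI_add_one_le hν hx))

lemma besselI_le_rpow_mul_exp_mul_besselI {ν x y : ℝ} (hν : -1 < ν) (hx : 0 < x) (hxy : x ≤ y) :
    besselI ν y ≤ (y / x) ^ (ν + 2) * Real.exp (y - x) * besselI ν x := by
  have hy := hx.trans_le hxy
  have hanti := antitoneOn_rpow_mul_exp_neg_mul_besselI hν (mem_Ioi.2 hx) (mem_Ioi.2 hy) hxy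
  calc besselI ν y
      = y ^ (ν + 2) * Real.exp y * (y ^ (-(ν + 2)) * Real.exp (-y) * besselI ν y) := by
        rw [Real.rpow_neg hy.le, Real.exp_neg]
        field_simp
    _ ≤ y ^ (ν + 2) * Real.exp y * (x ^ (-(ν + 2)) * Real.exp (-x) * besselI ν x) := by
        gcongr
    _ = (y / x) ^ (ν + 2) * Real.exp (y - x) * besselI ν x := by
        rw [Real.div_rpow hy.le hx.le, Real.rpow_neg hx.le, Real.exp_sub, Real.exp_neg]
        field_simp

lemma besselHeat_pos {ζ t r s : ℝ} (hζ : -1 / 2 < ζ) (ht : 0 < t) (hr : 0 < r) (hs : 0 < s) :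
    0 < besselHeat ζ t r s := by
  have hI : 0 < besselI (ζ - 1 / 2) (r * s / (2 * t)) :=
    besselI_pos (by linarith) (by positivity)
  rw [besselHeat]
  positivity

lemma neg_sq_add_sq_div_add_mul_div_sub_le {t t' : ℝ} (ht : 0 < t) (htt' : t ≤ t') (r s : ℝ) :
    -(r ^ 2 + s ^ 2) / (4 * t) + (r * s / (2 * t) - r * s / (2 * t')) ≤
      -(r ^ 2 + s ^ 2) / (4 * t') := by
  have hsquare (u : ℝ) (hu : 0 < u) :
      -(r ^ 2 + s ^ 2) / (4 * u) + r * s / (2 * u) = -((r - s) ^ 2 / (4 * u)) := by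
    field_simp
    ring
  have hle : (r - s) ^ 2 / (4 * t') ≤ (r - s) ^ 2 / (4 * t) := by gcongr
  linarith [hsquare t ht, hsquare t' (ht.trans_le htt')]

lemma besselHeat_le_rpow_mul_besselHeat {ζ t t' r s : ℝ} (hζ : -1 / 2 < ζ) (ht : 0 < t)
    (htt' : t ≤ t') (hr : 0 < r) (hs : 0 < s) :
    besselHeat ζ t r s ≤ (t' / t) ^ (ζ + 5 / 2) * besselHeat ζ t' r s := by
  have ht' := ht.trans_le htt'
  have hν : -1 < ζ - 1 / 2 := by linarith
  have hbessel := besselI_le_rpow_mul_exp_mul_besselI hν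
    (x := r * s / (2 * t')) (y := r * s / (2 * t)) (by positivity) (by gcongr)
  have hratio : r * s / (2 * t) / (r * s / (2 * t')) = t' / t := by field_simp
  have hexp := neg_sq_add_sq_div_add_mul_div_sub_le ht htt' r s
  have hpow : (t' / t) ^ (ζ + 5 / 2) = (t' / t) ^ (ζ - 1 / 2 + 2) * (t' / t) := by
    rw [← Real.rpow_add_one (by positivity)]
    ring_nf
  have hpos : 0 < besselI (ζ - 1 / 2) (r * s / (2 * t')) := besselI_pos hν (by positivity)
  rw [hratio] at hbessel
  rw [besselHeat, besselHeat, hpow]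
  generalize besselI (ζ - 1 / 2) (r * s / (2 * t')) = I' at *
  calc (r * s) ^ (1 / 2 - ζ) / (2 * t) * Real.exp (-(r ^ 2 + s ^ 2) / (4 * t)) *
        besselI (ζ - 1 / 2) (r * s / (2 * t))
      ≤ (r * s) ^ (1 / 2 - ζ) / (2 * t) * Real.exp (-(r ^ 2 + s ^ 2) / (4 * t)) *
          ((t' / t) ^ (ζ - 1 / 2 + 2) * Real.exp (r * s / (2 * t) - r * s / (2 * t')) * I') := by
        gcongr
    _ = (r * s) ^ (1 / 2 - ζ) / (2 * t) * (t' / t) ^ (ζ - 1 / 2 + 2) * Real.exp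
          (-(r ^ 2 + s ^ 2) / (4 * t) + (r * s / (2 * t) - r * s / (2 * t'))) * I' := by
        rw [Real.exp_add]
        ring
    _ ≤ (r * s) ^ (1 / 2 - ζ) / (2 * t) * (t' / t) ^ (ζ - 1 / 2 + 2) *
          Real.exp (-(r ^ 2 + s ^ 2) / (4 * t')) * I' := by gcongr
    _ = (t' / t) ^ (ζ - 1 / 2 + 2) * (t' / t) *
          ((r * s) ^ (1 / 2 - ζ) / (2 * t') * Real.exp (-(r ^ 2 + s ^ 2) / (4 * t')) * I') := by
        field_simp

lemma besselHeat_eq_rpow_mul_besselHeat_one (ζ : ℝ) {t r s : ℝ} (ht : 0 < t) (hr : 0 ≤ r)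
    (hs : 0 ≤ s) :
    besselHeat ζ t r s = t ^ (-(ζ + 1 / 2)) * besselHeat ζ 1 ((√t)⁻¹ * r) ((√t)⁻¹ * s) := by
  have hinv : ((√t)⁻¹) ^ 2 = t⁻¹ := by rw [inv_pow, Real.sq_sqrt ht.le]
  have hprod : (√t)⁻¹ * r * ((√t)⁻¹ * s) = t⁻¹ * (r * s) := by rw [← hinv]; ring
  have hsum : ((√t)⁻¹ * r) ^ 2 + ((√t)⁻¹ * s) ^ 2 = t⁻¹ * (r ^ 2 + s ^ 2) := by
    rw [← hinv]
    ring
  have hpow : t ^ (-(ζ + 1 / 2)) * t⁻¹ ^ (1 / 2 - ζ) = t⁻¹ := by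
    rw [Real.inv_rpow ht.le, ← Real.rpow_neg ht.le, ← Real.rpow_add ht, ← Real.rpow_neg_one]
    ring_nf
  have hprefactor : (r * s) ^ (1 / 2 - ζ) / (2 * t) =
      t ^ (-(ζ + 1 / 2)) * ((t⁻¹ * (r * s)) ^ (1 / 2 - ζ) / (2 * 1)) := by
    rw [Real.mul_rpow (inv_nonneg.2 ht.le) (mul_nonneg hr hs), mul_div_assoc, ← mul_assoc, hpow]
    field_simp
  have hexp : -(r ^ 2 + s ^ 2) / (4 * t) = -(t⁻¹ * (r ^ 2 + s ^ 2)) / (4 * 1) := by field_simp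
  have harg : r * s / (2 * t) = t⁻¹ * (r * s) / (2 * 1) := by field_simp
  rw [besselHeat, besselHeat, hprod, hsum, hprefactor, hexp, harg, mul_assoc, mul_assoc, mul_assoc]

lemma besselHeat_le_and_le_of_mem_Icc {ζ a b t r s : ℝ} (hζ : -1 / 2 < ζ) (ha : 0 < a)
    (ht : t ∈ Icc a b) (hr : 0 < r) (hs : 0 < s) :
    besselHeat ζ a r s ≤ (b / a) ^ (ζ + 5 / 2) * besselHeat ζ t r s ∧
      besselHeat ζ t r s ≤ (b / a) ^ (ζ + 5 / 2) * besselHeat ζ b r s := by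
  obtain ⟨hat, htb⟩ := ht
  have ht := ha.trans_le hat
  have hb := ht.trans_le htb
  have hexponent : 0 ≤ ζ + 5 / 2 := by linarith
  have hpt := besselHeat_pos hζ ht hr hs
  have hpb := besselHeat_pos hζ hb hr hs
  constructor
  · refine (besselHeat_le_rpow_mul_besselHeat hζ ha hat hr hs).trans ?_
    gcongr
  · refine (besselHeat_le_rpow_mul_besselHeat hζ ht htb hr hs).trans ?_
    gcongr

theorem stmt14 (ζ C₀ : ℝ) (hζ : -1/2 < ζ) (hC0 : 0 < C₀) (hC1 : C₀ ≤ 1) :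
    ∃ c₁ c₂ K₁ K₂ : ℝ, 0 < c₁ ∧ 0 < c₂ ∧ 0 < K₁ ∧ 0 < K₂ ∧
      ∀ τ ∈ Icc C₀ (1 / C₀), ∀ z s : ℝ, 0 < z → 0 < s →
        K₁ * besselHeat ζ 1 (c₁ * z) (c₁ * s) ≤ besselHeat ζ τ z s ∧
          besselHeat ζ τ z s ≤ K₂ * besselHeat ζ 1 (c₂ * z) (c₂ * s) := by
  set b := 1 / C₀
  have hb : 0 < b := by positivity
  set K := (b / C₀) ^ (ζ + 5 / 2)
  have hK : 0 < K := by positivity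
  refine ⟨(√C₀)⁻¹, (√b)⁻¹, K⁻¹ * C₀ ^ (-(ζ + 1 / 2)), K * b ^ (-(ζ + 1 / 2)),
    by positivity, by positivity, by positivity, by positivity, fun τ hτ z s hz hs ↦ ?_⟩
  obtain ⟨hlower, hupper⟩ := besselHeat_le_and_le_of_mem_Icc hζ hC0 hτ hz hs
  rw [mul_assoc, mul_assoc, ← besselHeat_eq_rpow_mul_besselHeat_one ζ hC0 hz.le hs.le,
    ← besselHeat_eq_rpow_mul_besselHeat_one ζ hb hz.le hs.le]
  exact ⟨(inv_mul_le_iff₀ hK).2 hlower, hupper⟩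
end
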